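/- arXiv:2412.00389 — 5 statements merged into one kernel-verified Lean document; each statement's English description precedes it below -/
import Mathlib

section
/- There exists an absolute constant c > 0 such that for every α ∈ (0,1] and every positive integer n, n/φ(n) ≤ (c/α) · Π_{p | n, p ≤ (ln n)^α} (1 + 1/p), where the product runs over primes p dividing n with p ≤ (ln n)^α. -/
open scoped Classical

lemma aux_prod_sq (N : ℕ) : (1:ℝ)/2 ≤ ∏ k ∈ Finset.Icc 2 N, (1 - 1/(k:ℝ)^2) := by
  have h : ∀ N : ℕ, ∏ k ∈ Finset.Icc 2 (N+1), (1 - 1/(k:ℝ)^2) = ((N:ℝ)+2)/(2*((N:ℝ)+1)) := by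
    intro N
    induction N with
    | zero => norm_num
    | succ m ih =>
      rw [Finset.prod_Icc_succ_top (by omega), ih]
      push_cast
      field_simp
      ring
  rcases N with _ | N
  · norm_num
  · rw [h, div_le_div_iff₀ (by norm_num) (by positivity)]
    linarith

lemma aux_inv_le (S : Finset ℕ) (hS : ∀ p ∈ S, 2 ≤ p) :
    ∏ p ∈ S, (1 - (p:ℝ)⁻¹)⁻¹ ≤ 2 * ∏ p ∈ S, (1 + 1/(p:ℝ)) := by
  have h1 : (1:ℝ)/2 ≤ ∏ p ∈ S, (1 - 1/(p:ℝ)^2) := by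
    refine (aux_prod_sq (S.sup id)).trans ?_
    have hsub : S ⊆ Finset.Icc 2 (S.sup id) := fun p hp =>
      Finset.mem_Icc.2 ⟨hS p hp, Finset.le_sup (f := id) hp⟩
    have hb : ∀ k : ℕ, 2 ≤ k → 0 ≤ 1 - 1/(k:ℝ)^2 := by
      intro k hk
      have : (2:ℝ) ≤ k := by exact_mod_cast hk
      rw [sub_nonneg, div_le_one (by positivity)]
      nlinarith
    refine Finset.prod_le_prod_of_subset_of_le_one hsub ?_ ?_
    · intro k hk; exact hb k (Finset.mem_Icc.1 hk).1
    · intro k _ _; simp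
  have h2 : (∏ p ∈ S, (1 - (p:ℝ)⁻¹)⁻¹) * ∏ p ∈ S, (1 - 1/(p:ℝ)^2) = ∏ p ∈ S, (1 + 1/(p:ℝ)) := by
    rw [← Finset.prod_mul_distrib]
    refine Finset.prod_congr rfl fun p hp => ?_
    have : (2:ℝ) ≤ p := by exact_mod_cast hS p hp
    have h3 : (p:ℝ) - 1 ≠ 0 := by linarith
    have h4 : (1 - (p:ℝ)⁻¹) ≠ 0 := by
      have : (1 - (p:ℝ)⁻¹) = (p-1)/p := by field_simp
      rw [this]; positivity
    field_simp
    ring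
  have h0 : 0 ≤ ∏ p ∈ S, (1 - (p:ℝ)⁻¹)⁻¹ := by
    refine Finset.prod_nonneg fun p hp => ?_
    have : (1:ℝ) ≤ p := by exact_mod_cast (by have := hS p hp; omega)
    rw [inv_nonneg, sub_nonneg]
    exact inv_le_one_of_one_le₀ this
  rw [← h2]
  nlinarith

lemma aux_lower (M : ℕ) : Real.log (M+1) ≤ 2 * ∏ p ∈ (M+1).primesBelow, (1 + 1/(p:ℝ)) := by
  refine le_trans ?_ (aux_inv_le _ fun p hp => (Nat.prime_of_mem_primesBelow hp).two_le)
  let f : ℕ →* ℝ := ⟨⟨fun n => ((n:ℝ))⁻¹, by simp⟩, by intro a b; simp [mul_comm]⟩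
  have hf : ∀ n : ℕ, f n = ((n:ℝ))⁻¹ := fun n => rfl
  have hs := EulerProduct.summable_and_hasSum_smoothNumbers_prod_primesBelow_geometric (f := f)
    (by intro p hp
        rw [hf, norm_inv, Real.norm_natCast]
        exact inv_lt_one_of_one_lt₀ (by exact_mod_cast hp.one_lt)) (M+1)
  have h := hs.2
  simp only [hf] at h
  have hl := log_add_one_le_harmonic M
  push_cast at hl
  refine hl.trans ?_
  rw [harmonic_eq_sum_Icc]
  push_cast
  have hsub : ∀ m ∈ Finset.Icc 1 M, m ∈ (M+1).smoothNumbers := fun m hm => by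
    rw [Finset.mem_Icc] at hm
    exact Nat.mem_smoothNumbers_of_lt (by omega) (by omega)
  have := sum_le_hasSum ((Finset.Icc 1 M).subtype (· ∈ (M+1).smoothNumbers))
    (fun i _ => by positivity) h
  refine le_trans (le_of_eq ?_) this
  rw [Finset.sum_subtype_of_mem (fun m : ℕ => ((m:ℝ))⁻¹) hsub]

lemma aux_theta (N : ℕ) (hN : 1 ≤ N) :
    ∑ p ∈ (N+1).primesBelow, Real.log p / p ≤ Real.log N + Real.log 4 := by
  have hdvd : ∏ p ∈ (N+1).primesBelow, p ^ (N/p) ∣ N.factorial := by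
    refine Finset.prod_dvd_of_isRelPrime ?_ ?_
    · intro p hp q hq hpq
      rw [Function.onFun, ← Nat.coprime_iff_isRelPrime]
      exact Nat.Coprime.pow _ _ ((Nat.coprime_primes (Nat.prime_of_mem_primesBelow hp)
        (Nat.prime_of_mem_primesBelow hq)).2 hpq)
    · intro p hp
      have hp := Nat.prime_of_mem_primesBelow hp
      rw [hp.pow_dvd_iff_le_factorization (Nat.factorial_ne_zero _),
        Nat.factorization_factorial hp (b := Nat.log p N + 2) (by omega)]
      have := Finset.single_le_sum (f := fun i => N / p ^ i) (fun i _ => Nat.zero_le _)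
        (show 1 ∈ Finset.Ico 1 (Nat.log p N + 2) by simp)
      simpa using this
  have hle : ∏ p ∈ (N+1).primesBelow, p ^ (N/p) ≤ N ^ N :=
    (Nat.le_of_dvd (Nat.factorial_pos _) hdvd).trans (Nat.factorial_le_pow N)
  have hle' : (∏ p ∈ (N+1).primesBelow, (p:ℝ) ^ (N/p)) ≤ (N:ℝ) ^ N := by exact_mod_cast hle
  have hpos : ∀ p ∈ (N+1).primesBelow, (0:ℝ) < p := fun p hp => by
    exact_mod_cast (Nat.prime_of_mem_primesBelow hp).pos
  have hlog := Real.log_le_log (Finset.prod_pos fun p hp => pow_pos (hpos p hp) _) hle'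
  rw [Real.log_prod (fun p hp => (pow_pos (hpos p hp) _).ne')] at hlog
  simp only [Real.log_pow] at hlog
  have hth : ∑ p ∈ (N+1).primesBelow, Real.log p ≤ Real.log 4 * N := by
    have := Chebyshev.theta_le_log4_mul_x (x := N) (by positivity)
    rw [Chebyshev.theta_eq_sum_primesLE_log] at this
    exact this
  have key : N * ∑ p ∈ (N+1).primesBelow, Real.log p / p ≤
      ∑ p ∈ (N+1).primesBelow, ((N/p : ℕ):ℝ) * Real.log p + ∑ p ∈ (N+1).primesBelow, Real.log p := by
    rw [Finset.mul_sum, ← Finset.sum_add_distrib]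
    refine Finset.sum_le_sum fun p hp => ?_
    have h0 := hpos p hp
    have h1 : (N:ℝ)/p ≤ ((N/p : ℕ):ℝ) + 1 := by
      rw [div_le_iff₀ h0]
      have := Nat.lt_div_mul_add (a := N) (b := p) (by exact_mod_cast h0)
      have : N ≤ (N/p + 1) * p := by rw [add_mul]; omega
      exact_mod_cast this
    have h2 : 0 ≤ Real.log p := Real.log_natCast_nonneg p
    calc (N:ℝ) * (Real.log p / p) = N / p * Real.log p := by ring
      _ ≤ (((N/p : ℕ):ℝ) + 1) * Real.log p := by gcongr
      _ = _ := by ring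
  have hNpos : (0:ℝ) < N := by exact_mod_cast hN
  have : N * ∑ p ∈ (N+1).primesBelow, Real.log p / p ≤ N * (Real.log N + Real.log 4) := by
    linarith
  exact le_of_mul_le_mul_left this hNpos

lemma aux_zeta (s : ℝ) (hs : 0 < s) (K : ℕ) :
    ∑ i ∈ Finset.range K, ((i:ℝ)) ^ (-(1+s)) ≤ 1 + 1/s := by
  have h1 : ∀ K : ℕ, ∑ i ∈ Finset.range K, ((i+2:ℕ):ℝ) ^ (-(1+s)) ≤ 1/s := by
    intro K
    have := AntitoneOn.sum_le_integral (x₀ := 1) (a := K) (f := fun x : ℝ => x ^ (-(1+s))) (by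
      intro x hx y hy hxy
      exact Real.rpow_le_rpow_of_nonpos (by linarith [hx.1]) hxy (by linarith))
    rw [integral_rpow (Or.inr ⟨by linarith, by
      rw [Set.uIcc_of_le (by linarith [Nat.cast_nonneg (α := ℝ) K])]
      intro h; linarith [h.1]⟩)] at this
    have h2 : (0:ℝ) ≤ (1 + (K:ℝ)) ^ (-(1+s)+1) := by positivity
    have h3 : ((1 + (K:ℝ)) ^ (-(1+s)+1) - 1 ^ (-(1+s)+1)) / (-(1+s)+1) ≤ 1/s := by
      rw [Real.one_rpow, show -(1+s)+1 = -s by ring] at *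
      rw [div_neg, ← neg_div]
      gcongr
      linarith
    refine le_trans (le_of_eq ?_) (this.trans h3)
    refine Finset.sum_congr rfl fun i _ => ?_
    push_cast
    congr 1; ring
  have h0 : 0 ≤ 1/s := by positivity
  rcases K with _ | _ | K
  · simp; positivity
  · rw [Finset.sum_range_one, Nat.cast_zero, Real.zero_rpow (by linarith)]; linarith
  · rw [Finset.sum_range_succ', Finset.sum_range_succ']
    simp only [Nat.cast_zero, Real.zero_rpow (show -(1+s) ≠ 0 by linarith), zero_add, Nat.cast_one,
      Real.one_rpow]
    have := h1 K
    push_cast at this ⊢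
    have e : ∀ i : ℕ, (i:ℝ)+1+1 = i+2 := fun i => by ring
    simp only [e]
    linarith

lemma aux_euler (s : ℝ) (hs : 0 < s) (N : ℕ) :
    ∏ p ∈ N.primesBelow, (1 + (p:ℝ) ^ (-(1+s))) ≤ 1 + 1/s := by
  let f : ℕ →* ℝ := ⟨⟨fun n => (n:ℝ) ^ (-(1+s)), by simp⟩, by
    intro a b; simp only [Nat.cast_mul]; exact Real.mul_rpow (by positivity) (by positivity)⟩
  have hf : ∀ n : ℕ, f n = (n:ℝ) ^ (-(1+s)) := fun n => rfl
  have hn : ∀ n : ℕ, 0 ≤ f n := fun n => by rw [hf]; positivity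
  have hsum : Summable f := summable_of_sum_range_le hn (aux_zeta s hs)
  have hE := EulerProduct.prod_primesBelow_geometric_eq_tsum_smoothNumbers hsum N
  have h1 : ∏ p ∈ N.primesBelow, (1 + (p:ℝ) ^ (-(1+s))) ≤ ∏ p ∈ N.primesBelow, (1 - f p)⁻¹ := by
    refine Finset.prod_le_prod (fun p _ => by positivity) fun p hp => ?_
    have hlt : f p < 1 := by
      rw [hf]
      exact Real.rpow_lt_one_of_one_lt_of_neg
        (by exact_mod_cast (Nat.prime_of_mem_primesBelow hp).one_lt) (by linarith)
    rw [← hf, ← one_div, le_div_iff₀ (by linarith)]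
    nlinarith [sq_nonneg (f p)]
  rw [hE] at h1
  refine h1.trans ((hsum.tsum_subtype_le _ _ hn).trans ?_)
  exact Real.tsum_le_of_sum_range_le hn (aux_zeta s hs)

lemma aux_upper : ∃ K : ℝ, 0 < K ∧ ∀ N : ℕ, 2 ≤ N →
    ∏ p ∈ (N+1).primesBelow, (1 + 1/(p:ℝ)) ≤ K * Real.log N := by
  have hl2 : 0 < Real.log 2 := Real.log_pos (by norm_num)
  refine ⟨(1/Real.log 2 + 1) * Real.exp (1 + Real.log 4 / Real.log 2), by positivity, ?_⟩
  intro N hN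
  have hl : Real.log 2 ≤ Real.log N := Real.log_le_log (by norm_num) (by exact_mod_cast hN)
  have hlN : 0 < Real.log N := hl2.trans_le hl
  set s : ℝ := 1 / Real.log N with hsdef
  have hs : 0 < s := by positivity
  have h1 : ∏ p ∈ (N+1).primesBelow, (1 + 1/(p:ℝ)) ≤
      ∏ p ∈ (N+1).primesBelow, ((1 + (p:ℝ) ^ (-(1+s))) * Real.exp (s * (Real.log p / p))) := by
    refine Finset.prod_le_prod (fun p _ => by positivity) fun p hp => ?_
    have hp0 : (0:ℝ) < p := by exact_mod_cast (Nat.prime_of_mem_primesBelow hp).pos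
    have hlp : 0 ≤ Real.log p := Real.log_natCast_nonneg p
    have e1 : 1 - s * Real.log p ≤ (p:ℝ) ^ (-s) := by
      rw [Real.rpow_def_of_pos hp0]
      have := Real.add_one_le_exp (Real.log p * -s)
      linarith
    have e2 : (p:ℝ) ^ (-(1+s)) = (p:ℝ) ^ (-s) / p := by
      rw [show -(1+s) = -s - 1 by ring, Real.rpow_sub hp0, Real.rpow_one]
    have e3 : 1/(p:ℝ) ≤ (p:ℝ) ^ (-(1+s)) + s * (Real.log p / p) := by
      rw [e2, show (p:ℝ) ^ (-s) / p + s * (Real.log p / p) = ((p:ℝ) ^ (-s) + s * Real.log p)/p by ring]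
      gcongr
      linarith
    have e4 := Real.add_one_le_exp (s * (Real.log p / p))
    have e5 : 0 ≤ (p:ℝ) ^ (-(1+s)) := by positivity
    have e6 : 0 ≤ s * (Real.log p / p) := by positivity
    calc 1 + 1/(p:ℝ) ≤ (1 + (p:ℝ) ^ (-(1+s))) * (s * (Real.log p / p) + 1) := by nlinarith
      _ ≤ _ := by gcongr
  rw [Finset.prod_mul_distrib, ← Real.exp_sum, ← Finset.mul_sum] at h1
  have h2 := aux_euler s hs (N+1)
  have h3 : s * ∑ p ∈ (N+1).primesBelow, Real.log p / p ≤ 1 + Real.log 4 / Real.log 2 := by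
    calc _ ≤ s * (Real.log N + Real.log 4) := by
          gcongr
          exact aux_theta N (by omega)
      _ = 1 + Real.log 4 / Real.log N := by rw [hsdef]; field_simp
      _ ≤ _ := by
          have : 0 ≤ Real.log 4 := Real.log_nonneg (by norm_num)
          gcongr
  have h4 : 1 + 1/s ≤ (1/Real.log 2 + 1) * Real.log N := by
    rw [hsdef, one_div_one_div, add_mul, one_mul, one_div, inv_mul_eq_div]
    gcongr
    rwa [one_le_div hl2]
  calc _ ≤ _ := h1
    _ ≤ ((1/Real.log 2 + 1) * Real.log N) * Real.exp (1 + Real.log 4 / Real.log 2) := by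
        gcongr
        exact h2.trans h4
    _ = _ := by ring

lemma aux_large (n : ℕ) (hn : 0 < n) (hL : Real.exp 1 ≤ Real.log n) :
    ∏ p ∈ n.primeFactors.filter (fun p : ℕ => ¬ (p : ℝ) ≤ Real.log n), (1 + 1/(p:ℝ)) ≤ Real.exp 1 := by
  set L := Real.log n
  set S := n.primeFactors.filter (fun p : ℕ => ¬ (p : ℝ) ≤ L)
  have hL0 : 0 < L := (Real.exp_pos 1).trans_le hL
  have hlL : 1 ≤ Real.log L := by rwa [Real.le_log_iff_exp_le hL0]
  have h1 : L ^ S.card ≤ n := by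
    calc L ^ S.card = ∏ p ∈ S, L := by simp
      _ ≤ ∏ p ∈ S, (p:ℝ) := Finset.prod_le_prod (fun _ _ => hL0.le) fun p hp =>
          (not_le.1 (Finset.mem_filter.1 hp).2).le
      _ ≤ ∏ p ∈ n.primeFactors, (p:ℝ) := by
          refine Finset.prod_le_prod_of_subset_of_one_le (show S ⊆ n.primeFactors from Finset.filter_subset _ _) ?_ ?_
          · intros; positivity
          · intro p hp _
            exact_mod_cast (Nat.prime_of_mem_primeFactors hp).one_le
      _ ≤ n := by
          rw [← Nat.cast_prod]
          exact Nat.cast_le.2 (Nat.le_of_dvd hn (Nat.prod_primeFactors_dvd n))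
  have h2 : S.card * Real.log L ≤ L := by
    rw [← Real.log_pow]
    exact Real.log_le_log (by positivity) h1
  have h3 : (S.card:ℝ) ≤ L := by nlinarith [Nat.cast_nonneg (α := ℝ) S.card]
  calc ∏ p ∈ S, (1 + 1/(p:ℝ)) ≤ ∏ p ∈ S, Real.exp (1/L) := by
        refine Finset.prod_le_prod (fun p _ => by positivity) fun p hp => ?_
        have := (not_le.1 (Finset.mem_filter.1 hp).2).le
        have h5 : 1/(p:ℝ) ≤ 1/L := by gcongr
        linarith [Real.add_one_le_exp (1/L)]
    _ = Real.exp (S.card * (1/L)) := by rw [Finset.prod_const, Real.exp_nat_mul]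
    _ ≤ _ := by
        rw [Real.exp_le_exp, mul_one_div, div_le_one hL0]
        exact h3

lemma aux_tot (n : ℕ) (hn : 0 < n) :
    (n:ℝ) / n.totient ≤ 2 * ∏ p ∈ n.primeFactors, (1 + 1/(p:ℝ)) := by
  refine le_trans (le_of_eq ?_)
    (aux_inv_le _ fun p hp => (Nat.prime_of_mem_primeFactors hp).two_le)
  have h : (n.totient : ℝ) = n * ∏ p ∈ n.primeFactors, (1 - (p:ℝ)⁻¹) := by
    have := congrArg (fun q : ℚ => (q:ℝ)) (Nat.totient_eq_mul_prod_factors n)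
    push_cast at this
    exact this
  have hn' : (n:ℝ) ≠ 0 := by positivity
  rw [h, Finset.prod_inv_distrib, div_mul_eq_div_div, div_self hn', one_div]

lemma core_totient_ratio_le_prod_small_primes :
    ∃ c : ℝ, 0 < c ∧ ∀ α : ℝ, α ∈ Set.Ioc (0 : ℝ) 1 → ∀ n : ℕ, 0 < n →
      (n : ℝ) / (Nat.totient n : ℝ) ≤
        c / α * ∏ p ∈ n.primeFactors.filter (fun p : ℕ => (p : ℝ) ≤ Real.log n ^ α),
          (1 + 1 / (p : ℝ)) := by
  obtain ⟨K, hK, hup⟩ := aux_upper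
  refine ⟨Real.exp (Real.exp 1) + 2 * (Real.exp 1 * (2 * K)), by positivity, ?_⟩
  rintro α ⟨hα0, hα1⟩ n hn
  have hone : ∀ S : Finset ℕ, 1 ≤ ∏ p ∈ S, (1 + 1/(p:ℝ)) := fun S =>
    Finset.one_le_prod fun p _ => by
      have : 0 ≤ 1/(p:ℝ) := by positivity
      linarith
  set L := Real.log n with hLdef
  set A := ∏ p ∈ n.primeFactors.filter (fun p : ℕ => (p : ℝ) ≤ L ^ α), (1 + 1 / (p : ℝ)) with hA
  have hA1 : 1 ≤ A := hone _
  have hn0 : (0:ℝ) < n := by exact_mod_cast hn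
  rcases lt_or_ge L (Real.exp 1) with hL | hL
  · have h1 : (n:ℝ) ≤ Real.exp (Real.exp 1) := by
      rw [← Real.log_le_iff_le_exp hn0]; exact hL.le
    have h2 : (n:ℝ) / n.totient ≤ n := by
      apply div_le_self hn0.le
      exact_mod_cast Nat.totient_pos.2 hn
    have h3 : Real.exp (Real.exp 1) ≤
        (Real.exp (Real.exp 1) + 2 * (Real.exp 1 * (2 * K))) / α := by
      rw [le_div_iff₀ hα0]
      have : 0 ≤ 2 * (Real.exp 1 * (2 * K)) := by positivity
      nlinarith [Real.exp_pos (Real.exp 1)]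
    have h4 := h2.trans (h1.trans h3)
    exact h4.trans (le_mul_of_one_le_right (by positivity) hA1)
  · have hL1 : 2 ≤ L := by linarith [Real.add_one_le_exp (1:ℝ)]
    have hL0 : 0 < L := by linarith
    have hLα : L ^ α ≤ L := by
      simpa using Real.rpow_le_rpow_of_exponent_le (by linarith : 1 ≤ L) hα1
    have hlog : 0 < Real.log L := Real.log_pos (by linarith)
    set M := ⌊L ^ α⌋₊ with hM
    set N := ⌊L⌋₊ with hN
    have hMN : M ≤ N := Nat.floor_mono hLα
    have hN2 : 2 ≤ N := Nat.le_floor (by exact_mod_cast hL1)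
    set S := n.primeFactors.filter (fun p : ℕ => ¬ (p : ℝ) ≤ L ^ α) with hS
    set B := ∏ p ∈ S.filter (fun p : ℕ => (p:ℝ) ≤ L), (1 + 1/(p:ℝ)) with hB
    set C := ∏ p ∈ S.filter (fun p : ℕ => ¬ (p:ℝ) ≤ L), (1 + 1/(p:ℝ)) with hC
    have hsplit : ∏ p ∈ n.primeFactors, (1 + 1/(p:ℝ)) = A * (B * C) := by
      rw [hB, hC, Finset.prod_filter_mul_prod_filter_not, hA, hS,
        Finset.prod_filter_mul_prod_filter_not]
    have hCle : C ≤ Real.exp 1 := by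
      refine le_trans ?_ (aux_large n hn hL)
      refine Finset.prod_le_prod_of_subset_of_one_le
        (Finset.filter_subset_filter _ (Finset.filter_subset _ _)) ?_ ?_
      · intros; positivity
      · intro p _ _
        have : 0 ≤ 1/(p:ℝ) := by positivity
        linarith
    have hBle : B ≤ 2 * K / α := by
      set P := ∏ p ∈ (M+1).primesBelow, (1 + 1/(p:ℝ)) with hP
      have hlow : α * Real.log L ≤ 2 * P := by
        refine le_trans ?_ (aux_lower M)
        rw [← Real.log_rpow hL0]
        exact Real.log_le_log (by positivity) (Nat.lt_floor_add_one _).le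
      have hBP : P * B ≤ K * Real.log L := by
        have hdis : Disjoint (M+1).primesBelow (S.filter (fun p : ℕ => (p:ℝ) ≤ L)) := by
          rw [Finset.disjoint_left]
          intro p hp hp'
          have h1 := Nat.lt_of_mem_primesBelow hp
          rw [hS, Finset.mem_filter, Finset.mem_filter] at hp'
          exact hp'.1.2 ((Nat.le_floor_iff (by positivity)).1 (Nat.lt_succ_iff.1 h1))
        rw [hP, hB, ← Finset.prod_union hdis]
        calc _ ≤ ∏ p ∈ (N+1).primesBelow, (1 + 1/(p:ℝ)) := by
              refine Finset.prod_le_prod_of_subset_of_one_le ?_ ?_ ?_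
              · intro p hp
                rw [Nat.mem_primesBelow]
                rcases Finset.mem_union.1 hp with hp | hp
                · exact ⟨by have := Nat.lt_of_mem_primesBelow hp; omega,
                    Nat.prime_of_mem_primesBelow hp⟩
                · rw [hS, Finset.mem_filter, Finset.mem_filter] at hp
                  exact ⟨Nat.lt_succ_iff.2 (Nat.le_floor hp.2),
                    Nat.prime_of_mem_primeFactors hp.1.1⟩
              · intros; positivity
              · intro p _ _
                have : 0 ≤ 1/(p:ℝ) := by positivity
                linarith
          _ ≤ K * Real.log N := hup N hN2
          _ ≤ K * Real.log L := by
              gcongr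
              exact Nat.floor_le hL0.le
      rw [le_div_iff₀ hα0]
      have hB0 : 0 ≤ B := zero_le_one.trans (hone _)
      have : (B * α) * Real.log L ≤ (2 * K) * Real.log L := by nlinarith
      exact le_of_mul_le_mul_right this hlog
    have hC0 : 0 ≤ C := zero_le_one.trans (hone _)
    calc (n:ℝ) / n.totient ≤ 2 * (A * (B * C)) := by rw [← hsplit]; exact aux_tot n hn
      _ ≤ 2 * (A * (2 * K / α * Real.exp 1)) := by gcongr
      _ = (2 * (Real.exp 1 * (2 * K))) / α * A := by ring
      _ ≤ _ := by
        gcongr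
        linarith [Real.exp_pos (Real.exp 1)]

lemma aux_bridge (n : ℕ) (x : ℝ) :
    n.primeFactors.filter (fun p => (p : ℝ) ≤ x) =
      (n.primeFactors.filter (fun p : ℕ => (p : ℝ) ≤ x)).image (Nat.cast : ℕ → ℝ) := by
  ext y
  simp only [Finset.bind_def, Finset.pure_def, Finset.mem_filter, Finset.mem_sup, Finset.mem_image,
    Finset.mem_singleton]
  constructor
  · rintro ⟨⟨a, ha, rfl⟩, hy⟩
    exact ⟨a, ⟨ha, hy⟩, rfl⟩
  · rintro ⟨a, ⟨ha, hy⟩, rfl⟩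
    exact ⟨⟨a, ha, rfl⟩, hy⟩

/-- Lemma (Radomskii, Lemma 3.3 of [Radomskii, Izv.]): there is an absolute constant `c > 0`
such that for every `α ∈ (0,1]` and every positive integer `n`,
`n/φ(n) ≤ (c/α) ∏_{p ∣ n, p ≤ (ln n)^α} (1 + 1/p)`. -/
theorem totient_ratio_le_prod_small_primes :
    ∃ c : ℝ, 0 < c ∧ ∀ α : ℝ, α ∈ Set.Ioc (0 : ℝ) 1 → ∀ n : ℕ, 0 < n →
      (n : ℝ) / (Nat.totient n : ℝ) ≤
        c / α * ∏ p ∈ n.primeFactors.filter (fun p => (p : ℝ) ≤ Real.log n ^ α),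
          (1 + 1 / (p : ℝ)) := by
  obtain ⟨c, hc, h⟩ := core_totient_ratio_le_prod_small_primes
  refine ⟨c, hc, fun α hα n hn => ?_⟩
  rw [aux_bridge, Finset.prod_image (fun a _ b _ hab => Nat.cast_injective hab)]
  exact h α hα n hn
end

section
/- Let s ∈ ℕ, let y ≥ 2 be real, and let 𝒟 be the collection of squarefree positive integers all of whose prime divisors lie in (1, y] (with 1 ∈ 𝒟). Define f : ℕ → ℝ by f(n) = Σ μ²(d_1)···μ²(d_s)/(d_1···d_s), where the sum runs over all tuples (d_1, ..., d_s) of elements of 𝒟 with lcm(d_1, ..., d_s) = n (so f(n) = 0 for n ∉ 𝒟). Then f is multiplicative, i.e., f(1) = 1 and f(mn) = f(m)·f(n) whenever gcd(m,n) = 1; moreover, for every prime p ≤ y one has f(p) = (1 + 1/p)^s − 1. -/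
open scoped Classical

lemma aux_lcm_mul {s : ℕ} (m n : ℕ) (h : Nat.Coprime m n)
    (a b : Fin s → ℕ) (ha : ∀ i, a i ∣ m) (hb : ∀ i, b i ∣ n) :
    Finset.univ.lcm (fun i => a i * b i) = Finset.univ.lcm a * Finset.univ.lcm b := by
  have hA : Finset.univ.lcm a ∣ m := Finset.lcm_dvd (fun i _ => ha i)
  have hB : Finset.univ.lcm b ∣ n := Finset.lcm_dvd (fun i _ => hb i)
  apply Nat.dvd_antisymm
  · exact Finset.lcm_dvd (fun i hi => mul_dvd_mul (Finset.dvd_lcm hi) (Finset.dvd_lcm hi))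
  · apply Nat.Coprime.mul_dvd_of_dvd_of_dvd (Nat.Coprime.of_dvd hA hB h)
    · exact Finset.lcm_dvd (fun i hi => (Dvd.intro _ rfl).trans
        (Finset.dvd_lcm (f := fun i => a i * b i) hi))
    · exact Finset.lcm_dvd (fun i hi => (Dvd.intro_left _ rfl).trans
        (Finset.dvd_lcm (f := fun i => a i * b i) hi))

lemma aux_eq (m n A B : ℕ) (hm : 0 < m) (hn : 0 < n) (hA : A ∣ m) (hB : B ∣ n) :
    A * B = m * n ↔ A = m ∧ B = n := by
  constructor
  · intro h
    have h1 := Nat.le_of_dvd hm hA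
    have h2 := Nat.le_of_dvd hn hB
    constructor <;> nlinarith
  · rintro ⟨rfl, rfl⟩; rfl

lemma aux_P (y : ℝ) (a b : ℕ) (h : Nat.Coprime a b) :
    (Squarefree (a * b) ∧ ∀ p : ℕ, p.Prime → p ∣ a * b → (p : ℝ) ≤ y) ↔
    (Squarefree a ∧ ∀ p : ℕ, p.Prime → p ∣ a → (p : ℝ) ≤ y) ∧
    (Squarefree b ∧ ∀ p : ℕ, p.Prime → p ∣ b → (p : ℝ) ≤ y) := by
  rw [Nat.squarefree_mul h]
  constructor
  · rintro ⟨⟨h1, h2⟩, h3⟩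
    exact ⟨⟨h1, fun p hp hd => h3 p hp (hd.mul_right _)⟩,
      ⟨h2, fun p hp hd => h3 p hp (hd.mul_left _)⟩⟩
  · rintro ⟨⟨h1, h3⟩, ⟨h2, h4⟩⟩
    refine ⟨⟨h1, h2⟩, fun p hp hd => ?_⟩
    rcases (Nat.Prime.dvd_mul hp).1 hd with h | h
    · exact h3 p hp h
    · exact h4 p hp h

lemma aux_gcd (m n a b : ℕ) (h : Nat.Coprime m n) (ha : a ∣ m) (hb : b ∣ n) :
    Nat.gcd (a * b) m = a := by
  have hc : Nat.Coprime b m := Nat.Coprime.of_dvd_left hb h.symm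
  rw [Nat.Coprime.gcd_mul_right_cancel a hc]
  exact Nat.gcd_eq_left ha

/-- The function `f(n) = ∑_{d₁,…,d_s ∈ 𝒟, [d₁,…,d_s] = n} μ²(d₁)⋯μ²(d_s)/(d₁⋯d_s)`,
where `𝒟` is the set of squarefree positive integers all of whose prime factors are at
most `y`, is multiplicative, and `f(p) = (1 + 1/p)^s - 1` for every prime `p ≤ y`. -/
theorem multiplicative_lcm_sum (s : ℕ) (hs : 0 < s) (y : ℝ) (hy : 2 ≤ y) (f : ℕ → ℝ)
    (hf : ∀ n : ℕ, f n =
      ∑ d ∈ Fintype.piFinset (fun _ : Fin s => n.divisors),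
        if (∀ i, Squarefree (d i) ∧ ∀ p : ℕ, p.Prime → p ∣ d i → (p : ℝ) ≤ y) ∧
            Finset.univ.lcm d = n
        then ∏ i, ((ArithmeticFunction.moebius (d i) : ℤ) : ℝ) ^ 2 / (d i : ℝ)
        else 0) :
    f 1 = 1 ∧
    (∀ m n : ℕ, 0 < m → 0 < n → Nat.Coprime m n → f (m * n) = f m * f n) ∧
    (∀ p : ℕ, p.Prime → (p : ℝ) ≤ y → f p = (1 + 1 / (p : ℝ)) ^ s - 1) := by
  refine ⟨?_, ?_, ?_⟩
  · rw [hf]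
    have h1 : Finset.univ.lcm (fun _ : Fin s => (1 : ℕ)) = 1 :=
      Nat.dvd_one.1 (Finset.lcm_dvd (fun i _ => dvd_rfl))
    rw [Nat.divisors_one, Fintype.piFinset_singleton, Finset.sum_singleton, if_pos]
    · simp
    · refine ⟨fun i => ⟨squarefree_one, fun p hp hd => ?_⟩, h1⟩
      exact absurd (Nat.dvd_one.1 hd) hp.one_lt.ne'
  · intro m n hm hn hmn
    rw [hf, hf, hf, Finset.sum_mul_sum, ← Finset.sum_product']
    symm
    refine Finset.sum_nbij' (fun x i => x.1 i * x.2 i)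
      (fun d => (fun i => Nat.gcd (d i) m, fun i => Nat.gcd (d i) n)) ?_ ?_ ?_ ?_ ?_
    · rintro ⟨a, b⟩ hx
      simp only [Finset.mem_product, Fintype.mem_piFinset, Nat.mem_divisors] at hx ⊢
      exact fun i => ⟨mul_dvd_mul (hx.1 i).1 (hx.2 i).1, by positivity⟩
    · intro d hd
      simp only [Finset.mem_product, Fintype.mem_piFinset, Nat.mem_divisors]
      exact ⟨fun i => ⟨Nat.gcd_dvd_right _ _, hm.ne'⟩, fun i => ⟨Nat.gcd_dvd_right _ _, hn.ne'⟩⟩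
    · rintro ⟨a, b⟩ hx
      simp only [Finset.mem_product, Fintype.mem_piFinset, Nat.mem_divisors] at hx
      refine Prod.ext (funext fun i => ?_) (funext fun i => ?_)
      · exact aux_gcd m n _ _ hmn (hx.1 i).1 (hx.2 i).1
      · show Nat.gcd (a i * b i) n = b i
        rw [mul_comm]
        exact aux_gcd n m _ _ hmn.symm (hx.2 i).1 (hx.1 i).1
    · intro d hd
      simp only [Fintype.mem_piFinset, Nat.mem_divisors] at hd
      funext i
      show Nat.gcd (d i) m * Nat.gcd (d i) n = d i
      rw [← Nat.Coprime.gcd_mul _ hmn]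
      exact Nat.gcd_eq_left (hd i).1
    · rintro ⟨a, b⟩ hx
      simp only [Finset.mem_product, Fintype.mem_piFinset, Nat.mem_divisors] at hx
      have ha : ∀ i, a i ∣ m := fun i => (hx.1 i).1
      have hb : ∀ i, b i ∣ n := fun i => (hx.2 i).1
      have hab : ∀ i, Nat.Coprime (a i) (b i) := fun i => Nat.Coprime.of_dvd (ha i) (hb i) hmn
      have key := aux_eq m n _ _ hm hn
        (Finset.lcm_dvd (s := Finset.univ) (fun i _ => ha i))
        (Finset.lcm_dvd (s := Finset.univ) (fun i _ => hb i))
      have hP := fun i => aux_P y (a i) (b i) (hab i)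
      have hprod : (∏ i, ((ArithmeticFunction.moebius (a i * b i) : ℤ) : ℝ) ^ 2
            / ((a i * b i : ℕ) : ℝ)) =
          (∏ i, ((ArithmeticFunction.moebius (a i) : ℤ) : ℝ) ^ 2 / (a i : ℝ)) *
          (∏ i, ((ArithmeticFunction.moebius (b i) : ℤ) : ℝ) ^ 2 / (b i : ℝ)) := by
        rw [← Finset.prod_mul_distrib]
        refine Finset.prod_congr rfl fun i _ => ?_
        rw [ArithmeticFunction.isMultiplicative_moebius.map_mul_of_coprime (hab i)]
        push_cast
        rw [mul_pow, mul_div_mul_comm]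
      simp only [aux_lcm_mul m n hmn a b ha hb, key, hP, hprod, forall_and]
      rw [ite_zero_mul_ite_zero]
      congr 1
      apply propext
      tauto
  · intro p hp hpy
    rw [hf]
    have hP : ∀ x ∈ p.divisors, Squarefree x ∧ ∀ q : ℕ, q.Prime → q ∣ x → (q : ℝ) ≤ y := by
      intro x hx
      have hd := Nat.dvd_of_mem_divisors hx
      refine ⟨hp.prime.squarefree.squarefree_of_dvd hd, fun q hq hqd => ?_⟩
      have := (Nat.prime_dvd_prime_iff_eq hq hp).1 (hqd.trans hd)
      rwa [this]
    have hsum : (∑ x ∈ p.divisors, (1 : ℝ) / (x : ℝ)) = 1 + 1 / (p : ℝ) := by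
      rw [hp.sum_divisors]; simp [add_comm]
    have htot : (∑ d ∈ Fintype.piFinset (fun _ : Fin s => p.divisors),
        ∏ i, (1 : ℝ) / (d i : ℝ)) = (1 + 1 / (p : ℝ)) ^ s := by
      rw [← hsum, ← Finset.prod_univ_sum (fun _ : Fin s => p.divisors)
        (fun _ (x : ℕ) => (1 : ℝ) / (x : ℝ))]
      simp
    have hone : (∑ d ∈ Fintype.piFinset (fun _ : Fin s => p.divisors),
        if d = (fun _ => 1) then (1 : ℝ) else 0) = 1 := by
      rw [Finset.sum_ite_eq', if_pos]
      simp [hp.ne_zero]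
    rw [← htot]
    nth_rewrite 2 [← hone]
    rw [← Finset.sum_sub_distrib]
    refine Finset.sum_congr rfl fun d hd => ?_
    rw [Fintype.mem_piFinset] at hd
    have hmu : (∏ i, ((ArithmeticFunction.moebius (d i) : ℤ) : ℝ) ^ 2 / (d i : ℝ)) =
        ∏ i, (1 : ℝ) / (d i : ℝ) := by
      refine Finset.prod_congr rfl fun i _ => ?_
      have h2 := ArithmeticFunction.moebius_sq_eq_one_of_squarefree (hP _ (hd i)).1
      congr 1
      exact_mod_cast h2
    have hl : Finset.univ.lcm d ∣ p :=
      Finset.lcm_dvd (fun i _ => Nat.dvd_of_mem_divisors (hd i))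
    by_cases h : d = fun _ => 1
    · subst h
      have h1 : Finset.univ.lcm (fun _ : Fin s => (1 : ℕ)) = 1 :=
        Nat.dvd_one.1 (Finset.lcm_dvd (fun i _ => dvd_rfl))
      rw [if_neg, if_pos rfl]
      · simp
      · rintro ⟨-, h3⟩
        exact hp.one_lt.ne (h1.symm.trans h3)
    · rw [if_pos, if_neg h, hmu, sub_zero]
      refine ⟨fun i => hP _ (hd i), ?_⟩
      rcases (Nat.dvd_prime hp).1 hl with h1 | h1
      · exfalso
        apply h
        funext i
        exact Nat.dvd_one.1 (h1 ▸ Finset.dvd_lcm (Finset.mem_univ i))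
      · exact h1
end

section
/- Let g be an arithmetic function with g(p) > 0 for every prime p, and suppose L := Σ_p 1/(p·g(p)) < ∞, where the sum runs over all primes. Then for every s ∈ ℕ, Π_{p > s} (1 + ((1 + 1/p)^s − 1)/g(p)) ≤ exp(e·L·s), where the product runs over all primes p > s and e is the base of the natural logarithm. -/
/-- If `g(p) > 0` for every prime `p` and `L = ∑_p 1/(p g(p)) < ∞`, then for every `s ∈ ℕ`,
`∏_{p > s} (1 + ((1 + 1/p)^s - 1)/g(p)) ≤ exp(e L s)`. -/
theorem prod_large_primes_le_exp (g : ℕ → ℝ) (hg : ∀ p : ℕ, p.Prime → 0 < g p) (L : ℝ)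
    (hsum : Summable fun p : Nat.Primes => 1 / (((p : ℕ) : ℝ) * g (p : ℕ)))
    (hL : (∑' p : Nat.Primes, 1 / (((p : ℕ) : ℝ) * g (p : ℕ))) = L) :
    ∀ s : ℕ, 0 < s →
      (∏' q : {p : Nat.Primes // s < (p : ℕ)},
          (1 + ((1 + 1 / (((q : Nat.Primes) : ℕ) : ℝ)) ^ s - 1) / g ((q : Nat.Primes) : ℕ))) ≤
        Real.exp (Real.exp 1 * L * s) := by
  intro s hs
  have hterm : ∀ p : Nat.Primes, 0 ≤ 1 / (((p : ℕ) : ℝ) * g (p : ℕ)) := fun p => by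
    have := hg p p.2
    positivity
  have hL0 : 0 ≤ L := hL ▸ tsum_nonneg hterm
  have hb : ∀ q : {p : Nat.Primes // s < (p : ℕ)},
      0 ≤ 1 + ((1 + 1 / (((q : Nat.Primes) : ℕ) : ℝ)) ^ s - 1) / g ((q : Nat.Primes) : ℕ) ∧
      1 + ((1 + 1 / (((q : Nat.Primes) : ℕ) : ℝ)) ^ s - 1) / g ((q : Nat.Primes) : ℕ) ≤
      Real.exp (Real.exp 1 * s *
        (1 / ((((q : Nat.Primes) : ℕ) : ℝ) * g ((q : Nat.Primes) : ℕ)))) := by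
    rintro ⟨p, hp⟩
    have hgp := hg p p.2
    have hp0 : (0 : ℝ) < ((p : ℕ) : ℝ) := by exact_mod_cast p.2.pos
    have hsp : (s : ℝ) < ((p : ℕ) : ℝ) := by exact_mod_cast hp
    dsimp only
    generalize g (p : ℕ) = c at *
    generalize ((p : ℕ) : ℝ) = x at *
    have h1 : 1 ≤ (1 + 1 / x) ^ s := one_le_pow₀ (by have : 0 < 1 / x := by positivity
                                                     linarith)
    constructor
    · have : 0 ≤ ((1 + 1 / x) ^ s - 1) / c := div_nonneg (by linarith) hgp.le
      linarith
    · have h2 : (1 + 1 / x) ^ s ≤ Real.exp (s / x) := by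
        have h : 1 + 1 / x ≤ Real.exp (1 / x) := by
          have := Real.add_one_le_exp (1 / x)
          linarith
        calc (1 + 1 / x) ^ s ≤ (Real.exp (1 / x)) ^ s := by gcongr
          _ = Real.exp (s / x) := by rw [← Real.exp_nat_mul]; congr 1; ring
      have ht0 : 0 ≤ s / x := by positivity
      have ht1 : s / x ≤ 1 := (div_le_one hp0).2 hsp.le
      generalize htt : (s : ℝ) / x = t at *
      have h3 : Real.exp t - 1 ≤ t * Real.exp t := by
        have h := Real.add_one_le_exp (-t)
        have h' : Real.exp (-t) * Real.exp t = 1 := by rw [← Real.exp_add]; simp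
        nlinarith [Real.exp_pos t]
      have h4 : t * Real.exp t ≤ t * Real.exp 1 := by gcongr
      have h5 : ((1 + 1 / x) ^ s - 1) / c ≤ (t * Real.exp 1) / c := by
        gcongr
        linarith
      have h6 : Real.exp 1 * s * (1 / (x * c)) = (t * Real.exp 1) / c := by
        rw [← htt]; field_simp
      rw [h6]
      have := Real.add_one_le_exp ((t * Real.exp 1) / c)
      linarith
  by_cases hm : Multipliable (fun q : {p : Nat.Primes // s < (p : ℕ)} =>
      (1 + ((1 + 1 / (((q : Nat.Primes) : ℕ) : ℝ)) ^ s - 1) / g ((q : Nat.Primes) : ℕ)))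
  · have ht := hm.hasProd
    rw [HasProd, SummationFilter.unconditional_filter] at ht
    refine le_of_tendsto' ht fun F => ?_
    refine (Finset.prod_le_prod (fun q _ => (hb q).1) (fun q _ => (hb q).2)).trans ?_
    rw [← Real.exp_sum, ← Finset.mul_sum, Real.exp_le_exp]
    have h : ∑ q ∈ F, 1 / ((((q : Nat.Primes) : ℕ) : ℝ) * g ((q : Nat.Primes) : ℕ)) ≤ L := by
      rw [← hL]
      have := hsum.sum_le_tsum (F.map (Function.Embedding.subtype _)) (fun p _ => hterm p)
      simpa only [Finset.sum_map, Function.Embedding.subtype_apply] using this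
    calc _ ≤ Real.exp 1 * s * L := by gcongr
      _ = _ := by ring
  · rw [tprod_eq_one_of_not_multipliable hm]
    exact Real.one_le_exp (by positivity)
end

section
/- There exists an absolute constant c_3 > 0 with the following property. Let c_0 > 0 and let g be an arithmetic function with g(p) ≥ c_0 for every prime p. Then for every s ∈ ℕ, Π_{p ≤ s} (1 + ((1 + 1/p)^s − 1)/g(p)) ≤ (1 + 1/c_0)^s · exp(s·log log(s+2) + c_3·s), where the product runs over primes p ≤ s. -/
/-- Partial sums of `log p / p`. -/
noncomputable def mertA (n : ℕ) : ℝ := ∑ p ∈ (Finset.range (n + 1)).filter Nat.Prime, Real.log p / p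
/-- Partial sums of `1 / p`. -/
noncomputable def mertT (n : ℕ) : ℝ := ∑ p ∈ (Finset.range (n + 1)).filter Nat.Prime, 1 / (p : ℝ)

lemma pow_div_dvd (n p : ℕ) (hp : p.Prime) : p ^ (n / p) ∣ n.factorial := by
  have h1 : ∀ k : ℕ, p ^ k ∣ (p * k).factorial := by
    intro k
    induction k with
    | zero => simp
    | succ k ih =>
      have h2 : (p * k).factorial * p.factorial ∣ (p * k + p).factorial :=
        Nat.factorial_mul_factorial_dvd_factorial_add _ _
      rw [pow_succ, mul_add, mul_one]
      exact (mul_dvd_mul ih (Nat.dvd_factorial hp.pos le_rfl)).trans h2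
  exact (h1 _).trans (Nat.factorial_dvd_factorial (Nat.mul_div_le n p))

lemma sum_floor_le (n : ℕ) (hn : 0 < n) :
    ∑ p ∈ (Finset.range (n + 1)).filter Nat.Prime, ((n / p : ℕ) : ℝ) * Real.log p
      ≤ n * Real.log n := by
  have h1 : ∏ p ∈ (Finset.range (n + 1)).filter Nat.Prime, p ^ (n / p) ∣ n.factorial := by
    apply Finset.prod_dvd_of_isRelPrime
    · intro p hp q hq hpq
      simp only [Finset.coe_filter, Set.mem_setOf_eq] at hp hq
      rw [Function.onFun, ← Nat.coprime_iff_isRelPrime]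
      exact Nat.Coprime.pow _ _ ((Nat.coprime_primes hp.2 hq.2).2 hpq)
    · intro p hp
      exact pow_div_dvd n p (Finset.mem_filter.1 hp).2
  have h2 := (Nat.le_of_dvd (Nat.factorial_pos n) h1).trans (Nat.factorial_le_pow n)
  have hpos : 0 < ∏ p ∈ (Finset.range (n + 1)).filter Nat.Prime, p ^ (n / p) :=
    Nat.pos_of_dvd_of_pos h1 (Nat.factorial_pos n)
  have h3 : Real.log ((∏ p ∈ (Finset.range (n + 1)).filter Nat.Prime, p ^ (n / p) : ℕ) : ℝ)
      ≤ Real.log ((n ^ n : ℕ) : ℝ) :=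
    Real.log_le_log (by exact_mod_cast hpos) (by exact_mod_cast h2)
  rw [Nat.cast_prod, Real.log_prod, Nat.cast_pow, Real.log_pow] at h3
  · simpa [Real.log_pow] using h3
  · intro p hp
    have := (Finset.mem_filter.1 hp).2.pos
    positivity

lemma mertA_le (n : ℕ) (hn : 0 < n) : mertA n ≤ Real.log n + Real.log 4 := by
  have h1 := sum_floor_le n hn
  have h2 : ∑ p ∈ (Finset.range (n + 1)).filter Nat.Prime, Real.log p ≤ Real.log 4 * n := by
    have h := Chebyshev.theta_le_log4_mul_x (x := (n : ℝ)) (by positivity)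
    rw [Chebyshev.theta_eq_sum_Icc, Nat.floor_natCast] at h
    rwa [Nat.range_succ_eq_Icc_zero]
  have hn' : (0 : ℝ) < n := by exact_mod_cast hn
  have h3 : n * mertA n ≤ n * Real.log n + Real.log 4 * n := by
    refine le_trans ?_ (add_le_add h1 h2)
    rw [mertA, Finset.mul_sum, ← Finset.sum_add_distrib]
    refine Finset.sum_le_sum fun p hp => ?_
    have hp := (Finset.mem_filter.1 hp).2
    have hp0 : (0 : ℝ) < p := by exact_mod_cast hp.pos
    have hl : 0 ≤ Real.log p := Real.log_natCast_nonneg p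
    have : (n : ℝ) / p ≤ (n / p : ℕ) + 1 := by
      rw [div_le_iff₀ hp0]
      have := (Nat.lt_mul_div_succ n hp.pos).le
      have h : (n : ℝ) ≤ p * ((n / p : ℕ) + 1) := by exact_mod_cast this
      linarith
    calc (n : ℝ) * (Real.log p / p) = (n / p) * Real.log p := by ring
      _ ≤ ((n / p : ℕ) + 1) * Real.log p := by gcongr
      _ = _ := by ring
  nlinarith

lemma mertT_aux (n : ℕ) (hn : 2 ≤ n) :
    mertT n ≤ mertA n / Real.log n + Real.log (Real.log n)
      + Real.log 4 * (1 / Real.log 2 - 1 / Real.log n) - Real.log (Real.log 2) := by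
  induction n, hn using Nat.le_induction with
  | base =>
    have : (Finset.range (2 + 1)).filter Nat.Prime = {2} := by decide
    have h2 : Real.log 2 ≠ 0 := (Real.log_pos (by norm_num)).ne'
    simp only [mertT, mertA, this, Finset.sum_singleton]
    push_cast
    field_simp
    linarith
  | succ n hn ih =>
    have hL : 0 < Real.log n := Real.log_pos (by exact_mod_cast hn)
    have hLL : Real.log n ≤ Real.log ((n + 1 : ℕ) : ℝ) :=
      Real.log_le_log (by positivity) (by push_cast; linarith)
    have hA := mertA_le n (by omega)
    have e : mertT (n + 1) - mertT n =
        (mertA (n + 1) - mertA n) / Real.log ((n + 1 : ℕ) : ℝ) := by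
      have hL' : Real.log ((n + 1 : ℕ) : ℝ) ≠ 0 := (hL.trans_le hLL).ne'
      unfold mertT mertA
      rw [Finset.range_add_one (n := n + 1), Finset.filter_insert]
      split_ifs with h
      · rw [Finset.sum_insert (by simp), Finset.sum_insert (by simp)]
        field_simp
        ring
      · simp
    generalize Real.log ((n + 1 : ℕ) : ℝ) = M at *
    generalize Real.log (n : ℝ) = L at *
    have hM := hL.trans_le hLL
    have hd : 0 ≤ 1 / L - 1 / M := sub_nonneg.2 (one_div_le_one_div_of_le hL hLL)
    have h1 := mul_le_mul_of_nonneg_right hA hd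
    have h2 := Real.log_le_sub_one_of_pos (div_pos hL hM)
    rw [Real.log_div hL.ne' hM.ne'] at h2
    have h3 : L * (1 / L - 1 / M) = 1 - L / M := by field_simp
    have h4 : mertA (n+1) / M = (mertA (n+1) - mertA n) / M + mertA n / L
      - mertA n * (1 / L - 1 / M) := by ring
    rw [h4, ← e]
    nlinarith

lemma mertT_le (n : ℕ) (hn : 2 ≤ n) :
    mertT n ≤ Real.log (Real.log n) + (1 + Real.log 4 / Real.log 2 - Real.log (Real.log 2)) := by
  have hL : 0 < Real.log n := Real.log_pos (by exact_mod_cast hn)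
  have h := mertT_aux n hn
  have hA := (div_le_div_iff_of_pos_right hL).2 (mertA_le n (by omega))
  rw [add_div, div_self hL.ne'] at hA
  have : Real.log 4 * (1 / Real.log 2 - 1 / Real.log n) =
    Real.log 4 / Real.log 2 - Real.log 4 / Real.log n := by ring
  linarith

/-- There is an absolute constant `c₃ > 0` such that if `g(p) ≥ c₀ > 0` for every prime `p`,
then for every `s ∈ ℕ`,
`∏_{p ≤ s} (1 + ((1 + 1/p)^s - 1)/g(p)) ≤ (1 + 1/c₀)^s exp(s log log(s+2) + c₃ s)`. -/
theorem prod_small_primes_le_exp :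
    ∃ c₃ : ℝ, 0 < c₃ ∧ ∀ c₀ : ℝ, 0 < c₀ → ∀ g : ℕ → ℝ, (∀ p : ℕ, p.Prime → c₀ ≤ g p) →
      ∀ s : ℕ, 0 < s →
        ∏ p ∈ (Finset.range (s + 1)).filter Nat.Prime,
            (1 + ((1 + 1 / (p : ℝ)) ^ s - 1) / g p) ≤
          (1 + 1 / c₀) ^ s * Real.exp (s * Real.log (Real.log (s + 2)) + c₃ * s) := by
  have hl2 : 0 < Real.log 2 := Real.log_pos (by norm_num)
  have hl4 : 0 < Real.log 4 := Real.log_pos (by norm_num)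
  have hll2 : Real.log (Real.log 2) ≤ 0 :=
    Real.log_nonpos hl2.le (by linarith [Real.log_two_lt_d9])
  have hq := div_pos hl4 hl2
  refine ⟨1 + Real.log 4 / Real.log 2 - Real.log (Real.log 2), by linarith, ?_⟩
  intro c₀ hc g hg s hs
  have hT : mertT s ≤ mertT (s + 2) := by
    unfold mertT
    apply Finset.sum_le_sum_of_subset_of_nonneg
    · apply Finset.filter_subset_filter
      intro x hx
      simp only [Finset.mem_range] at *
      omega
    · intros; positivity
  have hT2 := hT.trans (mertT_le (s + 2) (by omega))
  push_cast at hT2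
  have h1c : 1 ≤ 1 + 1 / c₀ := by linarith [one_div_pos.2 hc]
  calc _ ≤ ∏ p ∈ (Finset.range (s + 1)).filter Nat.Prime,
            ((1 + 1 / c₀) * Real.exp (s * (1 / (p : ℝ)))) := by
        have key : ∀ p ∈ (Finset.range (s + 1)).filter Nat.Prime,
            0 ≤ ((1 + 1 / (p : ℝ)) ^ s - 1) / g p ∧
            (1 + ((1 + 1 / (p : ℝ)) ^ s - 1) / g p) ≤
              ((1 + 1 / c₀) * Real.exp (s * (1 / (p : ℝ)))) := by
          intro p hp
          have hgp := hg p (Finset.mem_filter.1 hp).2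
          have hX : 1 ≤ (1 + 1 / (p : ℝ)) ^ s := by
            apply one_le_pow₀
            have : 0 ≤ 1 / (p : ℝ) := by positivity
            linarith
          have hE : (1 + 1 / (p : ℝ)) ^ s ≤ Real.exp (s * (1 / (p : ℝ))) := by
            rw [Real.exp_nat_mul]
            gcongr
            linarith [Real.add_one_le_exp (1 / (p : ℝ))]
          refine ⟨div_nonneg (by linarith) (by linarith), ?_⟩
          have h5 : ((1 + 1 / (p : ℝ)) ^ s - 1) / g p ≤ ((1 + 1 / (p : ℝ)) ^ s - 1) / c₀ :=
            div_le_div_of_nonneg_left (by linarith) hc hgp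
          have h6 : ((1 + 1 / (p : ℝ)) ^ s - 1) / c₀
            = (1 + 1 / (p : ℝ)) ^ s * (1 / c₀) - 1 / c₀ := by ring
          have h7 := mul_le_mul_of_nonneg_left hE (by linarith : 0 ≤ 1 + 1 / c₀)
          have := one_div_pos.2 hc
          nlinarith
        exact Finset.prod_le_prod (fun p hp => by linarith [(key p hp).1])
          (fun p hp => (key p hp).2)
    _ = (1 + 1 / c₀) ^ ((Finset.range (s + 1)).filter Nat.Prime).card
          * Real.exp (s * mertT s) := by
        rw [Finset.prod_mul_distrib, Finset.prod_const, ← Real.exp_sum, mertT, Finset.mul_sum]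
    _ ≤ _ := by
        have hcard : ((Finset.range (s + 1)).filter Nat.Prime).card ≤ s := by
          have : (Finset.range (s + 1)).filter Nat.Prime ⊆ Finset.Icc 1 s := by
            intro p hp
            rw [Finset.mem_filter, Finset.mem_range] at hp
            rw [Finset.mem_Icc]
            exact ⟨hp.2.pos, by omega⟩
          simpa using Finset.card_le_card this
        apply mul_le_mul (pow_le_pow_right₀ h1c hcard) _ (Real.exp_pos _).le (by positivity)
        apply Real.exp_le_exp.2
        have := mul_le_mul_of_nonneg_left hT2 (Nat.cast_nonneg (α := ℝ) s)
        linarith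
end

section
/- Let f(x) = b_d·x^d + ... + b_0 be a polynomial with integer coefficients such that b_d > 0, gcd(b_d, ..., b_0) = 1, and f(p) is a positive integer for every prime p. Then there exist constants x_0 > 0 and γ > 0 depending only on f such that for every real x ≥ x_0 and every squarefree positive integer n ≤ √x, #{p ≤ x : p prime and n divides f(p)} ≤ γ·π(x)·(Π_{q | n} min(q, d))/φ(n), where the product runs over primes q dividing n and π(x) denotes the number of primes not exceeding x. -/
namespace SelAux
open Finset

lemma aux_mu (P : Finset ℕ) (hsq : ∀ l ∈ P, Squarefree l) 
    (hdvd : ∀ l ∈ P, ∀ d, d ∣ l → d ∈ P) (k l : ℕ) (hk : k ∈ P) (hl : l ∈ P) :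
    ∑ d ∈ P with k ∣ d ∧ d ∣ l, (ArithmeticFunction.moebius d : ℝ) =
      if k = l then (ArithmeticFunction.moebius k : ℝ) else 0 := by
  have hl0 : l ≠ 0 := (hsq l hl).ne_zero
  by_cases hkl : k ∣ l
  · obtain ⟨m, rfl⟩ := hkl
    have hk0 : k ≠ 0 := left_ne_zero_of_mul hl0
    have hm0 : m ≠ 0 := right_ne_zero_of_mul hl0
    have hco : k.Coprime m := Nat.coprime_of_squarefree_mul (hsq _ hl)
    have h1 : (P.filter fun d => k ∣ d ∧ d ∣ k * m) = m.divisors.image (fun e => k * e) := by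
      ext d
      simp only [mem_filter, mem_image, Nat.mem_divisors]
      constructor
      · rintro ⟨_, ⟨e, rfl⟩, h2⟩
        exact ⟨e, ⟨Nat.dvd_of_mul_dvd_mul_left (Nat.pos_of_ne_zero hk0) h2, hm0⟩, rfl⟩
      · rintro ⟨e, ⟨he, _⟩, rfl⟩
        exact ⟨hdvd _ hl _ (Nat.mul_dvd_mul_left k he), dvd_mul_right _ _, Nat.mul_dvd_mul_left k he⟩
    rw [h1, Finset.sum_image (fun a _ b _ h => Nat.eq_of_mul_eq_mul_left (Nat.pos_of_ne_zero hk0) h)]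
    have h2 : ∀ e ∈ m.divisors, ((ArithmeticFunction.moebius (k * e) : ℤ) : ℝ) =
        (ArithmeticFunction.moebius k : ℝ) * (ArithmeticFunction.moebius e : ℝ) := by
      intro e he
      rw [ArithmeticFunction.isMultiplicative_moebius.map_mul_of_coprime
        (hco.coprime_dvd_right (Nat.dvd_of_mem_divisors he))]
      push_cast; rfl
    rw [Finset.sum_congr rfl h2, ← Finset.mul_sum]
    have h3 : ∑ e ∈ m.divisors, (ArithmeticFunction.moebius e : ℝ) = if m = 1 then 1 else 0 := by
      have := congrArg (fun g : ArithmeticFunction ℤ => g m) ArithmeticFunction.moebius_mul_coe_zeta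
      simp only [ArithmeticFunction.coe_mul_zeta_apply, ArithmeticFunction.one_apply] at this
      exact_mod_cast this
    rw [h3]
    by_cases hm : m = 1
    · simp [hm]
    · have : k ≠ k * m := fun h => hm (by
        have := Nat.eq_of_mul_eq_mul_left (Nat.pos_of_ne_zero hk0) ((mul_one k).trans h); exact this.symm)
      simp [hm, this]
  · have : k ≠ l := fun h => hkl (h ▸ dvd_rfl)
    rw [if_neg this, Finset.filter_false_of_mem, Finset.sum_empty]
    intro d _ h
    exact hkl (h.1.trans h.2)

noncomputable def selJ (P : Finset ℕ) : ℝ := ∑ l ∈ P, 1 / (Nat.totient l : ℝ)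

noncomputable def selLam (P : Finset ℕ) (d : ℕ) : ℝ :=
  d * ((ArithmeticFunction.moebius d : ℝ) / selJ P * ∑ l ∈ P with d ∣ l, 1 / (Nat.totient l : ℝ))

lemma selJ_pos (P : Finset ℕ) (h1 : 1 ∈ P) : 0 < selJ P := by
  have : ∀ l ∈ P, (0:ℝ) ≤ 1 / (Nat.totient l : ℝ) := fun l _ => by positivity
  have := Finset.single_le_sum this h1
  unfold selJ
  simp at this ⊢
  linarith

lemma selLam_one (P : Finset ℕ) (h1 : 1 ∈ P) : selLam P 1 = 1 := by
  have := selJ_pos P h1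
  unfold selLam
  simp only [isUnit_one, IsUnit.dvd, Finset.filter_true]
  rw [← selJ]
  simp
  field_simp

lemma selLam_abs (P : Finset ℕ) (h1 : 1 ∈ P) (d : ℕ) : |selLam P d| ≤ d := by
  have hJ := selJ_pos P h1
  unfold selLam
  have h2 : 0 ≤ ∑ l ∈ P with d ∣ l, 1 / (Nat.totient l : ℝ) := 
    Finset.sum_nonneg fun l _ => by positivity
  have h3 : ∑ l ∈ P with d ∣ l, 1 / (Nat.totient l : ℝ) ≤ selJ P :=
    Finset.sum_le_sum_of_subset_of_nonneg (Finset.filter_subset _ _) fun l _ _ => by positivity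
  have h4 : |((ArithmeticFunction.moebius d : ℤ) : ℝ)| ≤ 1 := by
    exact_mod_cast ArithmeticFunction.abs_moebius_le_one (n := d)
  rw [abs_mul, Nat.abs_cast, abs_mul, abs_div, abs_of_pos hJ, abs_of_nonneg h2]
  refine mul_le_of_le_one_right (Nat.cast_nonneg d) ?_
  rw [div_mul_eq_mul_div, div_le_one hJ]
  calc _ ≤ 1 * selJ P := mul_le_mul h4 h3 h2 zero_le_one
    _ = _ := one_mul _

lemma selU (P : Finset ℕ) (hsq : ∀ l ∈ P, Squarefree l) 
    (hdvd : ∀ l ∈ P, ∀ d, d ∣ l → d ∈ P) (k : ℕ) (hk : k ∈ P) :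
    ∑ d ∈ P, (if k ∣ d then selLam P d / d else 0) =
      (ArithmeticFunction.moebius k : ℝ) / selJ P * (1 / (Nat.totient k : ℝ)) := by
  have h1 : ∀ d ∈ P, (if k ∣ d then selLam P d / d else 0) =
      ∑ l ∈ P, (1 / selJ P * (1 / (Nat.totient l : ℝ))) *
        (if k ∣ d ∧ d ∣ l then (ArithmeticFunction.moebius d : ℝ) else 0) := by
    intro d hd
    have hd0 : (d : ℝ) ≠ 0 := Nat.cast_ne_zero.2 (hsq d hd).ne_zero
    by_cases h : k ∣ d
    · simp only [h, if_true, true_and, mul_ite, mul_zero]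
      rw [← Finset.sum_filter, selLam, mul_div_cancel_left₀ _ hd0, Finset.mul_sum]
      exact Finset.sum_congr rfl fun l _ => by ring
    · simp [h]
  rw [Finset.sum_congr rfl h1, Finset.sum_comm]
  simp_rw [← Finset.mul_sum, ← Finset.sum_filter]
  rw [Finset.sum_congr rfl (fun l hl => by rw [aux_mu P hsq hdvd k l hk hl])]
  simp only [mul_ite, mul_zero, Finset.sum_ite_eq, hk, if_true]
  ring

lemma selQuad (P : Finset ℕ) (hsq : ∀ l ∈ P, Squarefree l) (hone : 1 ∈ P)
    (hdvd : ∀ l ∈ P, ∀ d, d ∣ l → d ∈ P) :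
    ∑ d ∈ P, ∑ e ∈ P, selLam P d * selLam P e / (Nat.lcm d e : ℝ) = 1 / selJ P := by
  have hJ := selJ_pos P hone
  have h1 : ∀ d ∈ P, ∀ e ∈ P, selLam P d * selLam P e / (Nat.lcm d e : ℝ) = 
      ∑ k ∈ P, (Nat.totient k : ℝ) * ((if k ∣ d then selLam P d / d else 0) *
         (if k ∣ e then selLam P e / e else 0)) := by
    intro d hd e he
    have hd0 : (d : ℝ) ≠ 0 := Nat.cast_ne_zero.2 (hsq d hd).ne_zero
    have he0 : (e : ℝ) ≠ 0 := Nat.cast_ne_zero.2 (hsq e he).ne_zero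
    have hl0 : (Nat.lcm d e : ℝ) ≠ 0 := Nat.cast_ne_zero.2 
      (Nat.lcm_ne_zero (hsq d hd).ne_zero (hsq e he).ne_zero)
    have hg : (P.filter fun k => k ∣ d ∧ k ∣ e) = (Nat.gcd d e).divisors := by
      ext k
      simp only [mem_filter, Nat.mem_divisors, Nat.dvd_gcd_iff]
      constructor
      · rintro ⟨_, h⟩
        exact ⟨h, Nat.gcd_ne_zero_left (hsq d hd).ne_zero⟩
      · rintro ⟨h, _⟩
        exact ⟨hdvd d hd k h.1, h⟩
    have h2 : ∑ k ∈ P with k ∣ d ∧ k ∣ e, (Nat.totient k : ℝ) = (Nat.gcd d e : ℝ) := by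
      rw [hg]; exact_mod_cast Nat.sum_totient _
    have h3 : (Nat.gcd d e : ℝ) * (Nat.lcm d e : ℝ) = d * e := by
      exact_mod_cast Nat.gcd_mul_lcm d e
    have h4 : ∑ k ∈ P, (Nat.totient k : ℝ) * ((if k ∣ d then selLam P d / d else 0) *
         (if k ∣ e then selLam P e / e else 0)) = 
         (∑ k ∈ P with k ∣ d ∧ k ∣ e, (Nat.totient k : ℝ)) * (selLam P d / d * (selLam P e / e)) := by
      rw [Finset.sum_mul, Finset.sum_filter]
      refine Finset.sum_congr rfl fun k _ => ?_
      by_cases a : k ∣ d <;> by_cases b : k ∣ e <;> simp [a, b]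
    rw [h4, h2]
    field_simp
    linear_combination (-(selLam P d * selLam P e)) * h3
  rw [Finset.sum_congr rfl fun d hd => Finset.sum_congr rfl fun e he => h1 d hd e he]
  have h5 : ∑ d ∈ P, ∑ e ∈ P, ∑ k ∈ P, (Nat.totient k : ℝ) * ((if k ∣ d then selLam P d / d else 0) *
         (if k ∣ e then selLam P e / e else 0)) = 
      ∑ k ∈ P, (Nat.totient k : ℝ) * (∑ d ∈ P, (if k ∣ d then selLam P d / d else 0)) ^ 2 := by
    rw [Finset.sum_congr rfl fun d _ => Finset.sum_comm, Finset.sum_comm]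
    refine Finset.sum_congr rfl fun k _ => ?_
    simp_rw [← Finset.mul_sum]
    rw [sq, Finset.sum_mul_sum]
    simp_rw [Finset.mul_sum]
  rw [h5, Finset.sum_congr rfl fun k hk => by rw [selU P hsq hdvd k hk]]
  have h6 : ∀ k ∈ P, (Nat.totient k : ℝ) * ((ArithmeticFunction.moebius k : ℝ) / selJ P * (1 / (Nat.totient k : ℝ))) ^ 2
      = 1 / (selJ P)^2 * (1 / (Nat.totient k : ℝ)) := by
    intro k hk
    have hp : (Nat.totient k : ℝ) ≠ 0 := by
      have := Nat.totient_pos.2 (Nat.pos_of_ne_zero (hsq k hk).ne_zero)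
      positivity
    have hm : (ArithmeticFunction.moebius k : ℝ)^2 = 1 := by
      exact_mod_cast ArithmeticFunction.moebius_sq_eq_one_of_squarefree (hsq k hk)
    field_simp
    exact hm
  rw [Finset.sum_congr rfl h6, ← Finset.mul_sum, ← selJ]
  field_simp

lemma count_AP (N n a M : ℕ) (hn : 0 < n) (hM : 0 < M) (hco : n.Coprime M) :
    |(((range N).filter fun m => m ≡ a [MOD n] ∧ M ∣ m).card : ℝ) - N / (n * M)| ≤ 1 := by
  obtain ⟨c, hc1, hc2⟩ := Nat.chineseRemainder hco a 0
  have h : ((range N).filter fun m => m ≡ a [MOD n] ∧ M ∣ m) =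
      (range N).filter (fun m => m ≡ c [MOD (n * M)]) := by
    ext m
    simp only [mem_filter, mem_range, and_congr_right_iff]
    intro _
    rw [← Nat.modEq_and_modEq_iff_modEq_mul hco]
    constructor
    · rintro ⟨h1, h2⟩
      exact ⟨h1.trans hc1.symm, ((Nat.modEq_zero_iff_dvd).2 h2).trans hc2.symm⟩
    · rintro ⟨h1, h2⟩
      exact ⟨h1.trans hc1, (Nat.modEq_zero_iff_dvd).1 (h2.trans hc2)⟩
  have hnM : 0 < n * M := Nat.mul_pos hn hM
  have h2 := Nat.count_modEq_card N hnM c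
  rw [Nat.count_eq_card_filter_range] at h2
  rw [h, h2]
  have h3 : ((N / (n * M) : ℕ) : ℝ) ≤ (N : ℝ) / ((n * M : ℕ) : ℝ) := Nat.cast_div_le
  have h4 : (N : ℝ) / ((n * M : ℕ) : ℝ) < ((N / (n * M) : ℕ) : ℝ) + 1 := by
    rw [div_lt_iff₀ (by exact_mod_cast hnM)]
    have := Nat.lt_mul_div_succ N hnM
    have h5 : N < (N / (n * M) + 1) * (n * M) := by rw [mul_comm]; exact this
    exact_mod_cast h5
  push_cast at h3 h4 ⊢
  rw [abs_le]
  split_ifs <;> constructor <;> push_cast <;> linarith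

def selP (n z : ℕ) : Finset ℕ := (Icc 1 z).filter fun l => Squarefree l ∧ Nat.Coprime l n

lemma sieve_bound (N n a z : ℕ) (hn : 0 < n) (hz : 1 ≤ z) :
    (((range N).filter fun p => p.Prime ∧ p ≡ a [MOD n]).card : ℝ) ≤
      N / (n * selJ (selP n z)) + z ^ 4 + z := by
  set P := selP n z with hP
  have hsq : ∀ l ∈ P, Squarefree l := fun l hl => by
    simp only [hP, selP, mem_filter] at hl; exact hl.2.1
  have hcop : ∀ l ∈ P, Nat.Coprime n l := fun l hl => by
    simp only [hP, selP, mem_filter] at hl; exact hl.2.2.symm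
  have hle : ∀ l ∈ P, 1 ≤ l ∧ l ≤ z := fun l hl => by
    simp only [hP, selP, mem_filter, mem_Icc] at hl; exact hl.1
  have hone : 1 ∈ P := by simp [hP, selP, hz]
  have hdvd : ∀ l ∈ P, ∀ d, d ∣ l → d ∈ P := fun l hl d hd => by
    have h1 := hle l hl
    simp only [hP, selP, mem_filter, mem_Icc]
    exact ⟨⟨Nat.pos_of_dvd_of_pos hd h1.1, (Nat.le_of_dvd h1.1 hd).trans h1.2⟩,
      (hsq l hl).squarefree_of_dvd hd, ((hcop l hl).coprime_dvd_right hd).symm⟩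
  have hcard : (P.card : ℝ) ≤ z := by
    have : P.card ≤ (Icc 1 z).card := Finset.card_filter_le _ _
    simp at this
    exact_mod_cast this
  set A := (range N).filter fun m => m ≡ a [MOD n] with hA
  set w : ℕ → ℝ := fun m => ∑ d ∈ P, if d ∣ m then selLam P d else 0 with hw
  have h1 : ((range N).filter fun p => p.Prime ∧ p ≡ a [MOD n]) ⊆
      (A.filter fun p => p.Prime ∧ z < p) ∪ Icc 1 z := by
    intro p hp
    simp only [mem_filter, mem_range, mem_union, hA, mem_Icc] at hp ⊢
    have := hp.2.1.one_le
    by_cases h : p ≤ z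
    · right; omega
    · left; exact ⟨⟨hp.1, hp.2.2⟩, hp.2.1, by omega⟩
  have h2 : ((A.filter fun p => p.Prime ∧ z < p).card : ℝ) ≤ ∑ m ∈ A, w m ^ 2 := by
    rw [Finset.card_eq_sum_ones, Nat.cast_sum]
    calc _ ≤ ∑ m ∈ A with (m.Prime ∧ z < m), w m ^ 2 := by
          refine Finset.sum_le_sum fun p hp => ?_
          simp only [mem_filter] at hp
          have : w p = 1 := by
            rw [← selLam_one P hone, hw]
            simp only
            rw [Finset.sum_eq_single_of_mem 1 hone]
            · simp
            · intro d hd hd1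
              rw [if_neg]
              intro hdp
              rcases (Nat.dvd_prime hp.2.1).1 hdp with h | h
              · exact hd1 h
              · have := (hle d hd).2; omega
          simp [this]
      _ ≤ _ := Finset.sum_le_sum_of_subset_of_nonneg (Finset.filter_subset _ _) 
          fun _ _ _ => sq_nonneg _
  have h3 : ∑ m ∈ A, w m ^ 2 = ∑ d ∈ P, ∑ e ∈ P, selLam P d * selLam P e *
      (((range N).filter fun m => m ≡ a [MOD n] ∧ Nat.lcm d e ∣ m).card : ℝ) := by
    have : ∀ m ∈ A, w m ^ 2 = ∑ d ∈ P, ∑ e ∈ P, selLam P d * selLam P e * 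
        (if Nat.lcm d e ∣ m then 1 else 0) := by
      intro m _
      rw [sq, hw, Finset.sum_mul_sum]
      refine Finset.sum_congr rfl fun d _ => Finset.sum_congr rfl fun e _ => ?_
      simp only [Nat.lcm_dvd_iff]
      by_cases h : d ∣ m <;> by_cases h' : e ∣ m <;> simp [h, h']
    rw [Finset.sum_congr rfl this, Finset.sum_comm]
    refine Finset.sum_congr rfl fun d _ => ?_
    rw [Finset.sum_comm]
    refine Finset.sum_congr rfl fun e _ => ?_
    rw [← Finset.mul_sum, ← Finset.sum_filter, hA, Finset.filter_filter]
    simp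
  have h4 : ∑ m ∈ A, w m ^ 2 ≤ N / (n * selJ P) + z ^ 4 := by
    have h5 : (N : ℝ) / (n * selJ P) = ∑ d ∈ P, ∑ e ∈ P, selLam P d * selLam P e *
        (N / (n * (Nat.lcm d e : ℕ))) := by
      have : (N : ℝ) / (n * selJ P) = N / n * (1 / selJ P) := by 
        rw [div_mul_div_comm, mul_one]
      rw [this, ← selQuad P hsq hone hdvd, Finset.mul_sum]
      refine Finset.sum_congr rfl fun d _ => ?_
      rw [Finset.mul_sum]
      refine Finset.sum_congr rfl fun e _ => ?_
      rw [div_mul_div_comm, mul_div_assoc', mul_comm (N : ℝ)]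
    rw [h3, ← sub_le_iff_le_add', h5, ← Finset.sum_sub_distrib]
    simp_rw [← Finset.sum_sub_distrib, ← mul_sub]
    have h6 : ∀ d ∈ P, ∀ e ∈ P, selLam P d * selLam P e * 
       ((((range N).filter fun m => m ≡ a [MOD n] ∧ Nat.lcm d e ∣ m).card : ℝ) - 
         (N / (n * (Nat.lcm d e : ℕ)))) ≤ z * z := by
      intro d hd e he
      have hco : n.Coprime (Nat.lcm d e) := by
        refine Nat.Coprime.coprime_dvd_right (Nat.lcm_dvd_mul d e) ?_
        exact Nat.Coprime.mul_right (hcop d hd) (hcop e he)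
      have hlpos : 0 < Nat.lcm d e := Nat.lcm_pos (hle d hd).1 (hle e he).1
      have hc := count_AP N n a (Nat.lcm d e) hn hlpos hco
      refine (le_abs_self _).trans ?_
      rw [abs_mul, abs_mul]
      have hz1 : (d : ℝ) ≤ z := by exact_mod_cast (hle d hd).2
      have hz2 : (e : ℝ) ≤ z := by exact_mod_cast (hle e he).2
      calc _ ≤ (z : ℝ) * z * 1 := by
            refine mul_le_mul (mul_le_mul ((selLam_abs P hone d).trans hz1) 
              ((selLam_abs P hone e).trans hz2) (abs_nonneg _) (by positivity)) hc (abs_nonneg _) 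
              (by positivity)
        _ = _ := mul_one _
    calc _ ≤ ∑ d ∈ P, ∑ e ∈ P, (z : ℝ) * z := 
          Finset.sum_le_sum fun d hd => Finset.sum_le_sum fun e he => h6 d hd e he
      _ = (P.card : ℝ) * (P.card * (z * z)) := by simp
      _ ≤ (z : ℝ) * (z * (z * z)) := by gcongr
      _ = _ := by ring
  have h7 : (((range N).filter fun p => p.Prime ∧ p ≡ a [MOD n]).card : ℝ) ≤
      ((A.filter fun p => p.Prime ∧ z < p).card : ℝ) + z := by
    have := (Finset.card_le_card h1).trans (Finset.card_union_le _ _)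
    simp only [Nat.card_Icc, Nat.add_sub_cancel] at this
    exact_mod_cast this
  linarith

lemma sum_inv_sq (z : ℕ) : ∑ b ∈ Icc 1 z, 1 / (b : ℝ) ^ 2 ≤ 2 := by
  have : ∑ b ∈ Icc 1 z, 1 / (b : ℝ) ^ 2 ≤ 2 - 1 / (z:ℝ) := by
    induction z with
    | zero => simp
    | succ k ih =>
      rw [Finset.sum_Icc_succ_top (by omega)]
      rcases Nat.eq_zero_or_pos k with rfl | hk
      · simp
        norm_num
      · have hk' : (0:ℝ) < k := by exact_mod_cast hk
        have : 1 / ((k + 1 : ℕ) : ℝ) ^ 2 ≤ 1 / k - 1 / ((k + 1 : ℕ) : ℝ) := by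
          push_cast
          rw [div_sub_div _ _ hk'.ne' (by positivity), div_le_div_iff₀ (by positivity) (by positivity)]
          nlinarith
        linarith
  have h2 : (0:ℝ) ≤ 1 / z := by positivity
  linarith

lemma harm_le (z : ℕ) : ∑ m ∈ Icc 1 z, 1 / (m : ℝ) ≤ 
    2 * ∑ s ∈ Icc 1 z with Squarefree s, 1 / (s : ℝ) := by
  set S := (Icc 1 z).filter Squarefree with hS
  have h1 : Icc 1 z ⊆ (S ×ˢ Icc 1 z).image (fun t : ℕ × ℕ => (t.2 ^ 2 * t.1 : ℕ)) := by
    intro m hm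
    rw [mem_Icc] at hm
    obtain ⟨a, b, hab, ha⟩ := Nat.sq_mul_squarefree m
    rw [mem_image]
    have hb0 : 0 < b := Nat.pos_of_ne_zero (by rintro rfl; simp at hab; omega)
    have ha0 : 0 < a := Nat.pos_of_ne_zero ha.ne_zero
    have hale : a ≤ m := Nat.le_of_dvd (by omega) ⟨b ^ 2, by rw [← hab]; ring⟩
    have hble : b ≤ m := Nat.le_of_dvd (by omega) ⟨b * a, by rw [← hab]; ring⟩
    refine ⟨(a, b), ?_, hab⟩
    simp only [mem_product, hS, mem_filter, mem_Icc]
    exact ⟨⟨⟨ha0, by omega⟩, ha⟩, hb0, by omega⟩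
  calc _ ≤ ∑ m ∈ ((S ×ˢ Icc 1 z).image (fun t : ℕ × ℕ => (t.2 ^ 2 * t.1 : ℕ)) : Finset ℕ), 1 / (m : ℝ) :=
        Finset.sum_le_sum_of_subset_of_nonneg h1 fun _ _ _ => by positivity
    _ ≤ ∑ t ∈ S ×ˢ Icc 1 z, 1 / ((t.2 ^ 2 * t.1 : ℕ) : ℝ) :=
        Finset.sum_image_le_of_nonneg (f := fun m : ℕ => 1 / (m : ℝ)) (fun _ _ => by positivity)
    _ = (∑ b ∈ Icc 1 z, 1 / (b : ℝ) ^ 2) * ∑ s ∈ S, 1 / (s : ℝ) := by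
        rw [mul_comm, Finset.sum_mul_sum, Finset.sum_product]
        refine Finset.sum_congr rfl fun s _ => Finset.sum_congr rfl fun b _ => ?_
        push_cast
        rw [div_mul_div_comm, mul_one, mul_comm]
    _ ≤ _ := mul_le_mul_of_nonneg_right (sum_inv_sq z) (Finset.sum_nonneg fun _ _ => by positivity)

lemma sqf_le (n z : ℕ) (hn : 0 < n) : ∑ s ∈ Icc 1 z with Squarefree s, 1 / (s : ℝ) ≤ 
    (∑ k ∈ n.divisors, 1 / (k : ℝ)) * selJ (selP n z) := by
  have h1 : (Icc 1 z).filter Squarefree ⊆ (n.divisors ×ˢ selP n z).image (fun t : ℕ × ℕ => (t.1 * t.2 : ℕ)) := by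
    intro s hs
    simp only [mem_filter, mem_Icc] at hs
    obtain ⟨l, hl⟩ := Nat.gcd_dvd_left s n
    rw [mem_image]
    have hl0 : 0 < l := Nat.pos_of_ne_zero (by rintro rfl; simp at hl; omega)
    refine ⟨(Nat.gcd s n, l), ?_, hl.symm⟩
    have hls : l ∣ s := ⟨_, by rw [mul_comm]; exact hl⟩
    simp only [mem_product, Nat.mem_divisors, selP, mem_filter, mem_Icc]
    refine ⟨⟨Nat.gcd_dvd_right s n, hn.ne'⟩, ⟨hl0, (Nat.le_of_dvd (by omega) hls).trans hs.1.2⟩,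
      hs.2.squarefree_of_dvd hls, ?_⟩
    have hco : Nat.Coprime (Nat.gcd s n) l := Nat.coprime_of_squarefree_mul (hl ▸ hs.2)
    have h2 : Nat.gcd l n ∣ Nat.gcd s n := Nat.gcd_dvd_gcd_of_dvd_left n hls
    exact Nat.eq_one_of_dvd_coprimes hco h2 (Nat.gcd_dvd_left l n)
  calc _ ≤ ∑ m ∈ ((n.divisors ×ˢ selP n z).image (fun t : ℕ × ℕ => (t.1 * t.2 : ℕ)) : Finset ℕ), 1 / (m : ℝ) :=
        Finset.sum_le_sum_of_subset_of_nonneg h1 fun _ _ _ => by positivity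
    _ ≤ ∑ t ∈ n.divisors ×ˢ selP n z, 1 / ((t.1 * t.2 : ℕ) : ℝ) :=
        Finset.sum_image_le_of_nonneg (f := fun m : ℕ => 1 / (m : ℝ)) (fun _ _ => by positivity)
    _ = (∑ k ∈ n.divisors, 1 / (k : ℝ)) * ∑ l ∈ selP n z, 1 / (l : ℝ) := by
        rw [Finset.sum_mul_sum, Finset.sum_product]
        refine Finset.sum_congr rfl fun s _ => Finset.sum_congr rfl fun b _ => ?_
        push_cast
        rw [div_mul_div_comm, mul_one]
    _ ≤ _ := by
        refine mul_le_mul_of_nonneg_left ?_ (Finset.sum_nonneg fun _ _ => by positivity)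
        refine Finset.sum_le_sum fun l hl => ?_
        simp only [selP, mem_filter, mem_Icc] at hl
        have : 0 < Nat.totient l := Nat.totient_pos.2 hl.1.1
        have h3 : (Nat.totient l : ℝ) ≤ l := by exact_mod_cast Nat.totient_le l
        gcongr

lemma sigma_le (n : ℕ) (hn : Squarefree n) : 
    (∑ k ∈ n.divisors, 1 / (k : ℝ)) * (Nat.totient n : ℝ) ≤ n := by
  have h0 : (Nat.totient n : ℝ) = n * ∏ p ∈ n.primeFactors, (1 - (p : ℝ)⁻¹) := by
    have := Nat.totient_eq_mul_prod_factors n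
    have h2 := congrArg (fun q : ℚ => (q : ℝ)) this
    push_cast at h2
    exact h2
  have h1 : ∑ k ∈ n.divisors, 1 / (k : ℝ) = ∏ p ∈ n.primeFactors, (1 + (p : ℝ)⁻¹) := by
    let g : ArithmeticFunction ℝ := ⟨fun k => (k : ℝ)⁻¹, by simp⟩
    have hg : g.IsMultiplicative := by
      refine ⟨by simp [g], ?_⟩
      intro a b _
      simp [g, mul_comm]
    have := hg.prodPrimeFactors_one_add_of_squarefree hn
    simp only [g, ArithmeticFunction.coe_mk] at this
    rw [this]
    simp
  rw [h0, h1, mul_left_comm, ← Finset.prod_mul_distrib]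
  refine mul_le_of_le_one_right (Nat.cast_nonneg n) ?_
  refine Finset.prod_le_one (fun p hp => ?_) (fun p hp => ?_)
  all_goals
    have hp1 : (1:ℝ) ≤ p := by exact_mod_cast (Nat.prime_of_mem_primeFactors hp).one_le
    have h2 : (p : ℝ)⁻¹ ≤ 1 := inv_le_one_of_one_le₀ hp1
    have h3 : 0 ≤ (p : ℝ)⁻¹ := by positivity
    nlinarith

lemma selJ_lower (n z : ℕ) (hn : Squarefree n) : 
    Real.log (z + 1) * (Nat.totient n : ℝ) ≤ 2 * (n * selJ (selP n z)) := by
  have h1 : Real.log (z + 1) ≤ ∑ m ∈ Icc 1 z, 1 / (m : ℝ) := by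
    have := log_add_one_le_harmonic z
    rw [harmonic_eq_sum_Icc] at this
    push_cast at this
    simpa using this
  have h2 := harm_le z
  have h3 := sqf_le n z (Nat.pos_of_ne_zero hn.ne_zero)
  have h4 := sigma_le n hn
  have hJ : 0 ≤ selJ (selP n z) := Finset.sum_nonneg fun _ _ => by positivity
  have hph : (0:ℝ) ≤ Nat.totient n := Nat.cast_nonneg _
  calc _ ≤ 2 * ((∑ k ∈ n.divisors, 1 / (k : ℝ)) * selJ (selP n z)) * (Nat.totient n : ℝ) :=
        mul_le_mul_of_nonneg_right (by linarith) hph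
    _ = 2 * (((∑ k ∈ n.divisors, 1 / (k : ℝ)) * (Nat.totient n : ℝ)) * selJ (selP n z)) := by ring
    _ ≤ _ := by gcongr

lemma BT (N n a z : ℕ) (hn : Squarefree n) (hz : 1 ≤ z) :
    (((range N).filter fun p => p.Prime ∧ p ≡ a [MOD n]).card : ℝ) ≤
      2 * N / (Real.log (z + 1) * Nat.totient n) + z ^ 4 + z := by
  have h1 := sieve_bound N n a z (Nat.pos_of_ne_zero hn.ne_zero) hz
  have h2 := selJ_lower n z hn
  have hl : 0 < Real.log (z + 1) * (Nat.totient n : ℝ) := by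
    refine mul_pos (Real.log_pos ?_) ?_
    · have : (1:ℝ) ≤ z := by exact_mod_cast hz
      linarith
    · exact_mod_cast Nat.totient_pos.2 (Nat.pos_of_ne_zero hn.ne_zero)
  have h3 : (N : ℝ) / (n * selJ (selP n z)) = 2 * N / (2 * (n * selJ (selP n z))) := by
    rw [mul_div_mul_left _ _ two_ne_zero]
  have h4 : 2 * (N : ℝ) / (2 * (n * selJ (selP n z))) ≤ 2 * N / (Real.log (z + 1) * Nat.totient n) := by
    gcongr
  linarith

lemma roots_prime (f : Polynomial ℤ) (hcont : f.content = 1) (q : ℕ) (hq : q.Prime) :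
    ((range q).filter fun r : ℕ => (q : ℤ) ∣ f.eval (r : ℤ)).card ≤ min q f.natDegree := by
  haveI : Fact q.Prime := ⟨hq⟩
  refine le_min ((Finset.card_filter_le _ _).trans (by simp)) ?_
  set g := f.map (Int.castRingHom (ZMod q)) with hg
  have hg0 : g ≠ 0 := by
    intro h
    have h1 : (Polynomial.C (q : ℤ)) ∣ f := by
      rw [Polynomial.C_dvd_iff_dvd_coeff]
      intro i
      have := congrArg (fun t => Polynomial.coeff t i) h
      simp only [hg, Polynomial.coeff_map, Polynomial.coeff_zero, eq_intCast] at this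
      exact (ZMod.intCast_zmod_eq_zero_iff_dvd _ _).1 this
    have h2 := Polynomial.dvd_content_iff_C_dvd.2 h1
    rw [hcont] at h2
    have h3 : q ∣ 1 := by exact_mod_cast h2
    exact hq.one_lt.ne' (Nat.dvd_one.1 h3)
  have h1 : ((range q).filter fun r : ℕ => (q : ℤ) ∣ f.eval (r : ℤ)).card ≤ g.roots.toFinset.card := by
    refine Finset.card_le_card_of_injOn (fun r : ℕ => (r : ZMod q)) ?_ ?_
    · intro r hr
      simp only [coe_filter, mem_range, Set.mem_setOf_eq] at hr
      simp only [mem_coe, Multiset.mem_toFinset]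
      rw [Polynomial.mem_roots hg0, Polynomial.IsRoot, hg]
      have h2 : ((f.eval (r : ℤ) : ℤ) : ZMod q) = 0 := (ZMod.intCast_zmod_eq_zero_iff_dvd _ _).2 hr.2
      rw [← h2]
      have := Polynomial.eval_intCast_map (Int.castRingHom (ZMod q)) f (r : ℤ)
      simpa using this
    · intro r hr s hs h
      simp only [coe_filter, mem_range, Set.mem_setOf_eq] at hr hs
      have h3 := (ZMod.natCast_eq_natCast_iff' r s q).1 h
      rwa [Nat.mod_eq_of_lt hr.1, Nat.mod_eq_of_lt hs.1] at h3
  calc _ ≤ g.roots.toFinset.card := h1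
    _ ≤ g.roots.card := Multiset.toFinset_card_le _
    _ ≤ g.natDegree := Polynomial.card_roots' g
    _ ≤ f.natDegree := Polynomial.natDegree_map_le

lemma dvd_eval_mod (f : Polynomial ℤ) (q m : ℕ) (e : ℕ) (he : e ∣ q) :
    (e : ℤ) ∣ f.eval ((m % q : ℕ) : ℤ) ↔ (e : ℤ) ∣ f.eval (m : ℤ) := by
  have h0 : (q : ℤ) ∣ (m : ℤ) - ((m % q : ℕ) : ℤ) := by
    have := Nat.modEq_iff_dvd.1 (Nat.mod_modEq m q)
    exact this
  have h1 : (e : ℤ) ∣ f.eval (m : ℤ) - f.eval ((m % q : ℕ) : ℤ) :=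
    (Int.natCast_dvd_natCast.2 he).trans (h0.trans (Polynomial.sub_dvd_eval_sub _ _ f))
  exact (dvd_iff_dvd_of_dvd_sub h1).symm

lemma roots_count (f : Polynomial ℤ) (hcont : f.content = 1) (n : ℕ) (hn : Squarefree n) :
    ((range n).filter fun r : ℕ => (n : ℤ) ∣ f.eval (r : ℤ)).card ≤
      ∏ q ∈ n.primeFactors, min q f.natDegree := by
  calc _ ≤ (n.primeFactors.pi fun q => 
        (range q).filter fun r : ℕ => (q : ℤ) ∣ f.eval (r : ℤ)).card := by
        refine Finset.card_le_card_of_injOn (fun r => fun q _ => r % q) ?_ ?_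
        · intro r hr
          simp only [coe_filter, mem_range, Set.mem_setOf_eq] at hr
          simp only [mem_coe, Finset.mem_pi, mem_filter, mem_range]
          intro q hq
          refine ⟨Nat.mod_lt _ (Nat.prime_of_mem_primeFactors hq).pos, ?_⟩
          rw [dvd_eval_mod f q r q dvd_rfl]
          exact (Int.natCast_dvd_natCast.2 (Nat.dvd_of_mem_primeFactors hq)).trans hr.2
        · intro r hr s hs h
          simp only [coe_filter, mem_range, Set.mem_setOf_eq] at hr hs
          have h1 : ∀ q ∈ n.primeFactors, r ≡ s [MOD q] := fun q hq => 
            congrFun (congrFun h q) hq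
          have h2 : (n : ℤ) ∣ (s : ℤ) - r := by
            rw [← Nat.prod_primeFactors_of_squarefree hn, Nat.cast_prod]
            refine Finset.prod_dvd_of_coprime ?_ fun q hq => Nat.modEq_iff_dvd.1 (h1 q hq)
            intro p hp q hq hpq
            have := (Nat.coprime_primes (Nat.prime_of_mem_primeFactors hp) 
              (Nat.prime_of_mem_primeFactors hq)).2 hpq
            exact Nat.isCoprime_iff_coprime.2 this
          exact Nat.ModEq.eq_of_lt_of_lt (Nat.modEq_iff_dvd.2 h2) hr.1 hs.1
    _ = ∏ q ∈ n.primeFactors, ((range q).filter fun r : ℕ => (q : ℤ) ∣ f.eval (r : ℤ)).card := 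
        Finset.card_pi _ _
    _ ≤ _ := Finset.prod_le_prod' fun q hq => 
        roots_prime f hcont q (Nat.prime_of_mem_primeFactors hq)

lemma pi_lower (x : ℝ) (hx : 16 ≤ x) : 
    x / (4 * Real.log x) ≤ (((range (⌊x⌋₊ + 1)).filter Nat.Prime).card : ℝ) := by
  have h := Chebyshev.pi_ge' (x := x) (by linarith)
  rw [Nat.primeCounting, Nat.primeCounting', Nat.count_eq_card_filter_range] at h
  refine le_trans ?_ h
  have hL : 0 < Real.log x := Real.log_pos (by linarith)
  rw [div_le_div_iff₀ (by positivity) hL]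
  have h2 := Real.log_two_gt_d9
  have h2' := Real.log_two_lt_d9
  have h3 : Real.log (x + 2) ≤ (x + 2) / 16 - 1 + 4 * Real.log 2 := by
    have h4 : Real.log (x + 2) = Real.log ((x + 2) / 16) + Real.log 16 := by
      rw [← Real.log_mul (by positivity) (by norm_num)]; congr 1; ring
    have h5 : Real.log 16 = 4 * Real.log 2 := by
      rw [show (16:ℝ) = 2 ^ 4 by norm_num, Real.log_pow]; norm_num
    have h6 := Real.log_le_sub_one_of_pos (x := (x + 2) / 16) (by positivity)
    rw [h4, h5]; linarith
  have h7 : x ≤ 4 * ((x - 1) * Real.log 2 - Real.log (x + 2)) := by nlinarith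
  nlinarith

lemma BT_final (x : ℝ) (hx : 16 ≤ x) (n a : ℕ) (hn : Squarefree n) (hnx : (n : ℝ) ≤ Real.sqrt x) :
    (((range (⌊x⌋₊ + 1)).filter fun p => p.Prime ∧ p ≡ a [MOD n]).card : ℝ) ≤
      384 * (((range (⌊x⌋₊ + 1)).filter Nat.Prime).card : ℝ) / (Nat.totient n : ℝ) := by
  have hx0 : 0 ≤ x := by linarith
  have hL : 0 < Real.log x := Real.log_pos (by linarith)
  obtain ⟨y, hy1, hyx⟩ : ∃ y : ℝ, 1 ≤ y ∧ y ^ 16 = x := by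
    refine ⟨x ^ ((1:ℝ) / 16), Real.one_le_rpow (by linarith) (by norm_num), ?_⟩
    rw [← Real.rpow_natCast, ← Real.rpow_mul hx0]
    norm_num
  have hy0 : 0 < y := by linarith
  have hsqrt : Real.sqrt x = y ^ 8 := by
    rw [← hyx, show y ^ 16 = (y ^ 8) ^ 2 by ring, Real.sqrt_sq (by positivity)]
  have hlog : Real.log x = 16 * Real.log y := by
    rw [← hyx, Real.log_pow]; norm_num
  have hphi : (0 : ℝ) < Nat.totient n := by 
    exact_mod_cast Nat.totient_pos.2 (Nat.pos_of_ne_zero hn.ne_zero)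
  have hphile : (Nat.totient n : ℝ) ≤ y ^ 8 := by
    rw [← hsqrt]; refine le_trans ?_ hnx; exact_mod_cast Nat.totient_le n
  set z := ⌊y⌋₊ with hz
  have hz1 : 1 ≤ z := Nat.one_le_floor_iff y |>.2 hy1
  have hzy : (z : ℝ) ≤ y := Nat.floor_le hy0.le
  have hzy' : y ≤ z + 1 := (Nat.lt_floor_add_one y).le
  have hB := BT (⌊x⌋₊ + 1) n a z hn hz1
  have hN : ((⌊x⌋₊ + 1 : ℕ) : ℝ) ≤ 2 * x := by
    push_cast
    have := Nat.floor_le hx0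
    linarith
  have hlogy : 0 < Real.log y := by linarith
  have hlz : Real.log y ≤ Real.log (z + 1) := Real.log_le_log hy0 hzy'
  have t1 : 2 * ((⌊x⌋₊ + 1 : ℕ) : ℝ) / (Real.log (z + 1) * Nat.totient n) ≤ 
      64 * (x / (Real.log x * Nat.totient n)) := by
    calc _ ≤ 2 * (2 * x) / (Real.log y * Nat.totient n) := by gcongr
      _ = _ := by rw [hlog]; field_simp; norm_num
  have t2 : (z : ℝ) ^ 4 + z ≤ 32 * (x / (Real.log x * Nat.totient n)) := by
    have a1 : (z : ℝ) ^ 4 ≤ y ^ 4 := by gcongr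
    have a2 : (z : ℝ) ≤ y ^ 4 := hzy.trans (le_self_pow₀ hy1 (by norm_num))
    have a3 : y ^ 4 ≤ 16 * (x / (Real.log x * Nat.totient n)) := by
      rw [mul_div_assoc', le_div_iff₀ (by positivity)]
      have b1 : Real.log x ≤ 16 * y := by
        have := Real.log_le_sub_one_of_pos hy0
        linarith
      calc y ^ 4 * (Real.log x * Nat.totient n) ≤ y ^ 4 * ((16 * y) * y ^ 8) := by gcongr
        _ = 16 * y ^ 13 := by ring
        _ ≤ 16 * y ^ 16 := by gcongr <;> norm_num
        _ = 16 * x := by rw [hyx]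
    linarith
  have t3 := pi_lower x hx
  have t4 : 96 * (x / (Real.log x * Nat.totient n)) ≤ 
      384 * (((range (⌊x⌋₊ + 1)).filter Nat.Prime).card : ℝ) / (Nat.totient n : ℝ) := by
    calc _ = 384 * (x / (4 * Real.log x)) / (Nat.totient n : ℝ) := by field_simp; norm_num
      _ ≤ _ := by gcongr
  linarith

end SelAux

open SelAux in

/-- For a primitive polynomial `f` with positive leading coefficient taking positive values
at primes, there are constants `x₀, γ > 0` depending only on `f` such that for all `x ≥ x₀`
and all squarefree `n ≤ √x`,
`#{p ≤ x : p prime, n ∣ f(p)} ≤ γ π(x) (∏_{q ∣ n} min(q, deg f)) / φ(n)`. -/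
theorem card_primes_dvd_polynomial_le (f : Polynomial ℤ)
    (hlead : 0 < f.leadingCoeff) (hcont : f.content = 1)
    (hpos : ∀ p : ℕ, p.Prime → 0 < f.eval (p : ℤ)) :
    ∃ x₀ γ : ℝ, 0 < x₀ ∧ 0 < γ ∧ ∀ x : ℝ, x₀ ≤ x →
      ∀ n : ℕ, 0 < n → Squarefree n → (n : ℝ) ≤ Real.sqrt x →
        (((Finset.range (⌊x⌋₊ + 1)).filter fun p : ℕ =>
            p.Prime ∧ (n : ℤ) ∣ f.eval (p : ℤ)).card : ℝ) ≤
          γ * (((Finset.range (⌊x⌋₊ + 1)).filter Nat.Prime).card : ℝ) *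
            (∏ q ∈ n.primeFactors, (min q f.natDegree : ℝ)) / (Nat.totient n : ℝ) := by
  classical
  refine ⟨16, 384, by norm_num, by norm_num, ?_⟩
  intro x hx n hn0 hn hnx
  set R := (Finset.range n).filter fun r : ℕ => (n : ℤ) ∣ f.eval (r : ℤ) with hR
  set B : ℝ := 384 * (((Finset.range (⌊x⌋₊ + 1)).filter Nat.Prime).card : ℝ) / (Nat.totient n : ℝ)
    with hB
  have hB0 : 0 ≤ B := by positivity
  have hsub : ((Finset.range (⌊x⌋₊ + 1)).filter fun p : ℕ =>
      p.Prime ∧ (n : ℤ) ∣ f.eval (p : ℤ)) ⊆ R.biUnion fun a =>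
        (Finset.range (⌊x⌋₊ + 1)).filter fun p => p.Prime ∧ p ≡ a [MOD n] := by
    intro p hp
    simp only [Finset.mem_filter, Finset.mem_biUnion, hR, Finset.mem_range] at hp ⊢
    exact ⟨p % n, ⟨Nat.mod_lt _ hn0, (dvd_eval_mod f n p n dvd_rfl).2 hp.2.2⟩, hp.1, hp.2.1,
      (Nat.mod_modEq p n).symm⟩
  have h1 : (((Finset.range (⌊x⌋₊ + 1)).filter fun p : ℕ =>
      p.Prime ∧ (n : ℤ) ∣ f.eval (p : ℤ)).card : ℝ) ≤ ∑ a ∈ R,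
        (((Finset.range (⌊x⌋₊ + 1)).filter fun p => p.Prime ∧ p ≡ a [MOD n]).card : ℝ) := by
    exact_mod_cast (Finset.card_le_card hsub).trans Finset.card_biUnion_le
  have h2 : (R.card : ℝ) ≤ ∏ q ∈ n.primeFactors, (min q f.natDegree : ℝ) := by
    exact_mod_cast roots_count f hcont n hn
  calc _ ≤ _ := h1
    _ ≤ ∑ a ∈ R, B := Finset.sum_le_sum fun a _ => BT_final x hx n a hn hnx
    _ = (R.card : ℝ) * B := by simp
    _ ≤ (∏ q ∈ n.primeFactors, (min q f.natDegree : ℝ)) * B := by gcongr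
    _ = _ := by rw [hB]; ring
end
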